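/- arXiv:1608.02139 — 17 statements merged into one kernel-verified Lean document; each statement's English description precedes it below -/
import Mathlib

section
/- Let σ > 0, let T > 0, and let s : ℝ → ℝ be twice continuously differentiable on [0,T) with s(0) = 0, s'(0) = σ, and s''(t) = 2 s(t)³ + t s(t) for all t ∈ [0,T). Then for every t with 0 < t < T one has s(t) > σ t. -/
open Set

/-- For a solution of the homogeneous Painlevé II equation `s'' = 2s³ + ts` on `[0,T)`
with `s(0) = 0` and `s'(0) = σ > 0`, one has `s(t) > σ t` for `0 < t < T`. -/
theorem painleveII_gt_linear (σ T : ℝ) (hσ : 0 < σ) (hT : 0 < T) (s s' s'' : ℝ → ℝ)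
    (hderiv1 : ∀ t ∈ Ico (0:ℝ) T, HasDerivWithinAt s (s' t) (Ico 0 T) t)
    (hderiv2 : ∀ t ∈ Ico (0:ℝ) T, HasDerivWithinAt s' (s'' t) (Ico 0 T) t)
    (hcont : ContinuousOn s'' (Ico 0 T))
    (hs0 : s 0 = 0) (hs'0 : s' 0 = σ)
    (heq : ∀ t ∈ Ico (0:ℝ) T, s'' t = 2 * s t ^ 3 + t * s t) :
    ∀ t, 0 < t → t < T → σ * t < s t := by
  have hint : interior (Ico (0:ℝ) T) = Ioo 0 T := interior_Ico
  have hsub : Ioo (0:ℝ) T ⊆ Ico 0 T := Ioo_subset_Ico_self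
  have hc1 : ContinuousOn s (Ico 0 T) := fun x hx => (hderiv1 x hx).continuousWithinAt
  have hc2 : ContinuousOn s' (Ico 0 T) := fun x hx => (hderiv2 x hx).continuousWithinAt
  have h0 : (0:ℝ) ∈ Ico 0 T := ⟨le_refl _, hT⟩
  have hp : MonotoneOn (fun t => s t * s' t) (Ico 0 T) := by
    refine monotoneOn_of_hasDerivWithinAt_nonneg (f' := fun t => s' t * s' t + s t * s'' t)
      (convex_Ico 0 T) (hc1.mul hc2) ?_ ?_
    · intro x hx
      rw [hint] at hx ⊢
      exact ((hderiv1 x (hsub hx)).mul (hderiv2 x (hsub hx))).mono hsub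
    · intro x hx
      rw [hint] at hx
      have hx0 : 0 ≤ x := hx.1.le
      have h1 : s' x * s' x + s x * s'' x = s' x ^ 2 + 2 * (s x ^ 2) ^ 2 + x * s x ^ 2 := by
        rw [heq x (hsub hx)]; ring
      show 0 ≤ s' x * s' x + s x * s'' x
      rw [h1]; positivity
  have hq : MonotoneOn (fun t => s t * s t) (Ico 0 T) := by
    refine monotoneOn_of_hasDerivWithinAt_nonneg (f' := fun t => s' t * s t + s t * s' t)
      (convex_Ico 0 T) (hc1.mul hc1) ?_ ?_
    · intro x hx
      rw [hint] at hx ⊢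
      exact ((hderiv1 x (hsub hx)).mul (hderiv1 x (hsub hx))).mono hsub
    · intro x hx
      rw [hint] at hx
      have h1 := hp h0 (hsub hx) hx.1.le
      simp only [hs0, zero_mul] at h1
      show 0 ≤ s' x * s x + s x * s' x
      linarith
  have hpos0 : ∀ t, 0 < t → t < T → ∃ u, 0 < u ∧ u < t ∧ 0 < s u := by
    intro t ht htT
    have h1 : HasDerivWithinAt s σ (Ioo 0 t) 0 := by
      rw [← hs'0]
      exact (hderiv1 0 h0).mono fun x hx => ⟨hx.1.le, hx.2.trans htT⟩
    have h2 := (hasDerivWithinAt_iff_tendsto_slope' (by simp)).1 h1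
    have h3 := h2.eventually (lt_mem_nhds hσ)
    have : (nhdsWithin (0:ℝ) (Ioo 0 t)).NeBot := by
      rw [nhdsWithin_Ioo_eq_nhdsGT ht]; infer_instance
    obtain ⟨u, hu, hu2⟩ := (h3.and self_mem_nhdsWithin).exists
    refine ⟨u, hu2.1, hu2.2, ?_⟩
    rw [slope_def_field, hs0, sub_zero, sub_zero] at hu
    exact (div_pos_iff_of_pos_right hu2.1).1 hu
  have hpos : ∀ t, 0 < t → t < T → 0 < s t := by
    intro t ht htT
    by_contra hn
    push Not at hn
    obtain ⟨u, hu0, hut, hsu⟩ := hpos0 t ht htT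
    obtain ⟨v, hv, hv0⟩ := intermediate_value_Icc' hut.le
      (hc1.mono fun x hx => ⟨hu0.le.trans hx.1, hx.2.trans_lt htT⟩) ⟨hn, hsu.le⟩
    have h1 := hq (a := u) (b := v) ⟨hu0.le, hut.trans htT⟩
      ⟨hu0.le.trans hv.1, hv.2.trans_lt htT⟩ hv.1
    simp only [hv0, mul_zero] at h1
    nlinarith
  have hm : StrictMonoOn s' (Ico 0 T) := by
    refine strictMonoOn_of_hasDerivWithinAt_pos (f' := s'') (convex_Ico 0 T) hc2 ?_ ?_
    · intro x hx
      rw [hint] at hx ⊢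
      exact (hderiv2 x (hsub hx)).mono hsub
    · intro x hx
      rw [hint] at hx
      have h1 := hpos x hx.1 hx.2
      have h2 := hx.1
      rw [heq x (hsub hx)]
      positivity
  have hl : StrictMonoOn (fun t => s t - σ * t) (Ico 0 T) := by
    refine strictMonoOn_of_hasDerivWithinAt_pos (f' := fun t => s' t - σ * 1)
      (convex_Ico 0 T) (hc1.sub (by fun_prop)) ?_ ?_
    · intro x hx
      rw [hint] at hx ⊢
      exact ((hderiv1 x (hsub hx)).mono hsub).sub ((hasDerivWithinAt_id x _).const_mul σ)
    · intro x hx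
      rw [hint] at hx
      have h1 := hm h0 (hsub hx) hx.1
      rw [hs'0] at h1
      show 0 < s' x - σ * 1
      linarith
  intro t ht htT
  have h1 := hl h0 ⟨ht.le, htT⟩ ht
  simp only [hs0, mul_zero, sub_zero] at h1
  linarith
end

section
/- Let σ > 0, let T > 0, and let s : ℝ → ℝ be twice continuously differentiable on [0,T) with s(0) = 0, s'(0) = σ, and s''(t) = 2 s(t)³ + t s(t) for all t ∈ [0,T). Then for every t with 0 < t < T one has s'(t)² > σ² + s(t)⁴. -/
open Set MeasureTheory intervalIntegral Real

theorem painleveII_first_integral_lower (σ T : ℝ) (hσ : 0 < σ) (hT : 0 < T) (s s' s'' : ℝ → ℝ)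
    (hderiv1 : ∀ t ∈ Ico (0:ℝ) T, HasDerivWithinAt s (s' t) (Ico 0 T) t)
    (hderiv2 : ∀ t ∈ Ico (0:ℝ) T, HasDerivWithinAt s' (s'' t) (Ico 0 T) t)
    (hcont : ContinuousOn s'' (Ico 0 T))
    (hs0 : s 0 = 0) (hs'0 : s' 0 = σ)
    (heq : ∀ t ∈ Ico (0:ℝ) T, s'' t = 2 * s t ^ 3 + t * s t) :
    ∀ t, 0 < t → t < T → σ ^ 2 + s t ^ 4 < s' t ^ 2 := by
  have hint : interior (Ico (0:ℝ) T) = Ioo 0 T := interior_Ico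
  have h0 : (0:ℝ) ∈ Ico (0:ℝ) T := ⟨le_refl _, hT⟩
  have hconv : Convex ℝ (Ico (0:ℝ) T) := convex_Ico 0 T
  have c1 : ContinuousOn s (Ico 0 T) := fun t ht => (hderiv1 t ht).continuousWithinAt
  have c2 : ContinuousOn s' (Ico 0 T) := fun t ht => (hderiv2 t ht).continuousWithinAt
  have d1 : ∀ t ∈ Ioo (0:ℝ) T, HasDerivAt s (s' t) t := fun t ht =>
    (hderiv1 t (Ioo_subset_Ico_self ht)).hasDerivAt (Ico_mem_nhds ht.1 ht.2)
  have d2 : ∀ t ∈ Ioo (0:ℝ) T, HasDerivAt s' (2 * s t ^ 3 + t * s t) t := fun t ht => by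
    rw [← heq t (Ioo_subset_Ico_self ht)]
    exact (hderiv2 t (Ioo_subset_Ico_self ht)).hasDerivAt (Ico_mem_nhds ht.1 ht.2)
  have dG : ∀ t ∈ Ioo (0:ℝ) T,
      deriv (fun x => s x * s' x) t = s' t ^ 2 + 2 * s t ^ 4 + t * s t ^ 2 := fun t ht => by
    rw [((d1 t ht).fun_mul (d2 t ht)).deriv]; ring
  have dF' : ∀ t ∈ Ioo (0:ℝ) T,
      HasDerivAt (fun x => s' x ^ 2 - s x ^ 4) (2 * t * (s t * s' t)) t := fun t ht => by
    refine (((d2 t ht).fun_pow 2).fun_sub ((d1 t ht).fun_pow 4)).congr_deriv ?_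
    norm_num
    ring
  have dF : ∀ t ∈ Ioo (0:ℝ) T,
      deriv (fun x => s' x ^ 2 - s x ^ 4) t = 2 * t * (s t * s' t) := fun t ht => (dF' t ht).deriv
  have cG : ContinuousOn (fun x => s x * s' x) (Ico 0 T) := c1.mul c2
  have cF : ContinuousOn (fun x => s' x ^ 2 - s x ^ 4) (Ico 0 T) := (c2.pow 2).sub (c1.pow 4)
  have mG : MonotoneOn (fun x => s x * s' x) (Ico 0 T) := by
    refine monotoneOn_of_deriv_nonneg hconv cG ?_ ?_ <;> rw [hint]
    · exact fun t ht =>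
        ((d1 t ht).fun_mul (d2 t ht)).differentiableAt.differentiableWithinAt
    · intro t ht
      have := ht.1
      rw [dG t ht]; positivity
  have mF : MonotoneOn (fun x => s' x ^ 2 - s x ^ 4) (Ico 0 T) := by
    refine monotoneOn_of_deriv_nonneg hconv cF ?_ ?_ <;> rw [hint]
    · exact fun t ht => (dF' t ht).differentiableAt.differentiableWithinAt
    · intro t ht
      have h1 := ht.1
      have h2 := mG h0 (Ioo_subset_Ico_self ht) h1.le
      simp only [hs0, zero_mul] at h2
      rw [dF t ht]; positivity
  have sG : StrictMonoOn (fun x => s x * s' x) (Ico 0 T) := by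
    refine strictMonoOn_of_deriv_pos hconv cG ?_
    rw [hint]
    intro t ht
    have h1 := ht.1
    have h2 := mF h0 (Ioo_subset_Ico_self ht) h1.le
    simp only [hs0, hs'0] at h2
    rw [dG t ht]
    have : 0 < σ ^ 2 := by positivity
    have h4 : 0 ≤ s t ^ 4 := by positivity
    have h5 : 0 ≤ t * s t ^ 2 := by positivity
    linarith
  have sF : StrictMonoOn (fun x => s' x ^ 2 - s x ^ 4) (Ico 0 T) := by
    refine strictMonoOn_of_deriv_pos hconv cF ?_
    rw [hint]
    intro t ht
    have h1 := ht.1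
    have h2 := sG h0 (Ioo_subset_Ico_self ht) h1
    simp only [hs0, zero_mul] at h2
    rw [dF t ht]; positivity
  intro t ht htT
  have h := sF h0 ⟨ht.le, htT⟩ ht
  simp only [hs0, hs'0] at h
  linarith
end

section
/- Let σ > 0, let T > 0, and let s : ℝ → ℝ be twice continuously differentiable on [0,T) with s(0) = 0, s'(0) = σ, and s''(t) = 2 s(t)³ + t s(t) for all t ∈ [0,T). Then for all τ, t with 0 < τ < t < T one has t − τ < 1/s(τ) − 1/s(t); in particular s(t) > 1/(1/s(τ) + τ − t). -/
open Set MeasureTheory intervalIntegral Real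

theorem painleveII_reciprocal_bound (σ T : ℝ) (hσ : 0 < σ) (hT : 0 < T) (s s' s'' : ℝ → ℝ)
    (hderiv1 : ∀ t ∈ Ico (0:ℝ) T, HasDerivWithinAt s (s' t) (Ico 0 T) t)
    (hderiv2 : ∀ t ∈ Ico (0:ℝ) T, HasDerivWithinAt s' (s'' t) (Ico 0 T) t)
    (hcont : ContinuousOn s'' (Ico 0 T))
    (hs0 : s 0 = 0) (hs'0 : s' 0 = σ)
    (heq : ∀ t ∈ Ico (0:ℝ) T, s'' t = 2 * s t ^ 3 + t * s t) :
    ∀ τ t, 0 < τ → τ < t → t < T →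
      t - τ < 1 / s τ - 1 / s t ∧ 1 / (1 / s τ + τ - t) < s t := by
  have d1 : ∀ t, 0 < t → t < T → HasDerivAt s (s' t) t := fun t h0 h1 =>
    (hderiv1 t ⟨h0.le, h1⟩).hasDerivAt (Ico_mem_nhds h0 h1)
  have d2 : ∀ t, 0 < t → t < T → HasDerivAt s' (s'' t) t := fun t h0 h1 =>
    (hderiv2 t ⟨h0.le, h1⟩).hasDerivAt (Ico_mem_nhds h0 h1)
  have c1 : ContinuousOn s (Ico 0 T) := fun t ht => (hderiv1 t ht).continuousWithinAt
  have c2 : ContinuousOn s' (Ico 0 T) := fun t ht => (hderiv2 t ht).continuousWithinAt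
  -- the derivative stays positive
  have pos' : ∀ t ∈ Ico (0:ℝ) T, 0 < s' t := by
    intro b hb
    by_contra hneg
    have hsub : Icc 0 b ⊆ Ico 0 T := fun x hx => ⟨hx.1, hx.2.trans_lt hb.2⟩
    have hclosed : IsClosed (Icc 0 b ∩ s' ⁻¹' Iic 0) :=
      (c2.mono hsub).preimage_isClosed_of_isClosed isClosed_Icc isClosed_Iic
    have hcomp : IsCompact (Icc 0 b ∩ s' ⁻¹' Iic 0) :=
      isCompact_Icc.of_isClosed_subset hclosed inter_subset_left
    obtain ⟨c, hc, hmin⟩ := hcomp.exists_isLeast ⟨b, ⟨hb.1, le_rfl⟩, not_lt.mp hneg⟩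
    have hcT : c < T := hc.1.2.trans_lt hb.2
    have hsubc : Icc 0 c ⊆ Ico 0 T := fun x hx => ⟨hx.1, hx.2.trans_lt hcT⟩
    have hlt : ∀ x, 0 ≤ x → x < c → 0 < s' x := by
      intro x h0 hx
      by_contra h
      exact absurd (hmin ⟨⟨h0, hx.le.trans hc.1.2⟩, not_lt.mp h⟩) (not_le.mpr hx)
    have m1 : MonotoneOn s (Icc 0 c) := by
      apply monotoneOn_of_deriv_nonneg (convex_Icc 0 c) (c1.mono hsubc)
      · intro x hx
        rw [interior_Icc] at hx
        exact (d1 x hx.1 (hx.2.trans hcT)).differentiableAt.differentiableWithinAt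
      · intro x hx
        rw [interior_Icc] at hx
        rw [(d1 x hx.1 (hx.2.trans hcT)).deriv]
        exact (hlt x hx.1.le hx.2).le
    have m2 : MonotoneOn s' (Icc 0 c) := by
      apply monotoneOn_of_deriv_nonneg (convex_Icc 0 c) (c2.mono hsubc)
      · intro x hx
        rw [interior_Icc] at hx
        exact (d2 x hx.1 (hx.2.trans hcT)).differentiableAt.differentiableWithinAt
      · intro x hx
        rw [interior_Icc] at hx
        have hx0 := hx.1
        rw [(d2 x hx.1 (hx.2.trans hcT)).deriv, heq x ⟨hx.1.le, hx.2.trans hcT⟩]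
        have : 0 ≤ s x := by
          rw [← hs0]
          exact m1 ⟨le_rfl, hc.1.1⟩ ⟨hx.1.le, hx.2.le⟩ hx.1.le
        positivity
    have h := m2 ⟨le_rfl, hc.1.1⟩ ⟨hc.1.1, le_rfl⟩ hc.1.1
    have h2 : s' c ≤ 0 := hc.2
    linarith
  have sm : StrictMonoOn s (Ico 0 T) := by
    apply strictMonoOn_of_deriv_pos (convex_Ico 0 T) c1
    intro x hx
    rw [interior_Ico] at hx
    rw [(d1 x hx.1 hx.2).deriv]
    exact pos' x ⟨hx.1.le, hx.2⟩
  have pos : ∀ t, 0 < t → t < T → 0 < s t := by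
    intro t h0 h1
    rw [← hs0]
    exact sm ⟨le_rfl, hT⟩ ⟨h0.le, h1⟩ h0
  have dE : ∀ x, 0 < x → x < T → HasDerivAt (fun x => s' x ^ 2 - s x ^ 4)
      (2 * x * s x * s' x) x := by
    intro x h0 h1
    have h := ((d2 x h0 h1).pow 2).sub ((d1 x h0 h1).pow 4)
    refine h.congr_deriv ?_
    rw [heq x ⟨h0.le, h1⟩]
    push_cast
    ring
  have mE : MonotoneOn (fun x => s' x ^ 2 - s x ^ 4) (Ico 0 T) := by
    apply monotoneOn_of_deriv_nonneg (convex_Ico 0 T) ((c2.pow 2).sub (c1.pow 4))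
    · intro x hx
      rw [interior_Ico] at hx
      exact (dE x hx.1 hx.2).differentiableAt.differentiableWithinAt
    · intro x hx
      rw [interior_Ico] at hx
      change 0 ≤ deriv (fun x => s' x ^ 2 - s x ^ 4) x
      rw [(dE x hx.1 hx.2).deriv]
      have h1 := pos x hx.1 hx.2
      have h2 := pos' x ⟨hx.1.le, hx.2⟩
      have h3 := hx.1
      positivity
  have key : ∀ t, 0 < t → t < T → s t ^ 2 < s' t := by
    intro t h0 h1
    have h := mE ⟨le_rfl, hT⟩ ⟨h0.le, h1⟩ h0.le
    simp only [hs0, hs'0] at h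
    have h2 := pos' t ⟨h0.le, h1⟩
    have h3 : 0 < σ ^ 2 := by positivity
    apply lt_of_pow_lt_pow_left₀ 2 h2.le
    nlinarith
  have dR : ∀ x, 0 < x → x < T → HasDerivAt (fun x => (s x)⁻¹ + x) (-s' x / s x ^ 2 + 1) x :=
    fun x h0 h1 => ((d1 x h0 h1).fun_inv (pos x h0 h1).ne').add (hasDerivAt_id x)
  have aR : StrictAntiOn (fun x => (s x)⁻¹ + x) (Ioo 0 T) := by
    apply strictAntiOn_of_deriv_neg (convex_Ioo 0 T)
    · exact fun x hx => (dR x hx.1 hx.2).continuousAt.continuousWithinAt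
    · intro x hx
      rw [interior_Ioo] at hx
      rw [(dR x hx.1 hx.2).deriv]
      have h1 := pos x hx.1 hx.2
      have h2 : 1 < s' x / s x ^ 2 := by
        rw [one_lt_div (by positivity)]
        exact key x hx.1 hx.2
      rw [neg_div]
      linarith
  intro τ t h0 h1 h2
  have h := aR ⟨h0, h1.trans h2⟩ ⟨h0.trans h1, h2⟩ h1
  simp only [← one_div] at h
  refine ⟨by linarith, ?_⟩
  have hp := pos t (h0.trans h1) h2
  have hq : 0 < 1 / s t := by positivity
  rw [one_div_lt (by linarith) hp]
  linarith
end

section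
/- Let σ > 0, let T > 0, and let s : ℝ → ℝ be twice continuously differentiable on [0,T) with s(0) = 0, s'(0) = σ, and s''(t) = 2 s(t)³ + t s(t) for all t ∈ [0,T). Then for every τ with 0 < τ < T one has T ≤ τ + 1/s(τ). (Equivalently, τ + s(τ)⁻¹ does not belong to the maximal domain of s, so s experiences finite-time blow-up in positive time.) -/
open Set MeasureTheory intervalIntegral Real

theorem painleveII_mono_aux (a T : ℝ) (f f' : ℝ → ℝ)
    (h : ∀ t ∈ Ico a T, HasDerivWithinAt f (f' t) (Ico a T) t)
    (h0 : ∀ t ∈ Ico a T, 0 ≤ f' t) : MonotoneOn f (Ico a T) := by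
  apply monotoneOn_of_hasDerivWithinAt_nonneg (f' := f') (convex_Ico a T)
  · exact fun t ht => (h t ht).continuousWithinAt
  · exact fun t ht => (h t (interior_subset ht)).mono interior_subset
  · exact fun t ht => h0 t (interior_subset ht)

theorem painleveII_blowup_bound (σ T : ℝ) (hσ : 0 < σ) (hT : 0 < T) (s s' s'' : ℝ → ℝ)
    (hderiv1 : ∀ t ∈ Ico (0:ℝ) T, HasDerivWithinAt s (s' t) (Ico 0 T) t)
    (hderiv2 : ∀ t ∈ Ico (0:ℝ) T, HasDerivWithinAt s' (s'' t) (Ico 0 T) t)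
    (hcont : ContinuousOn s'' (Ico 0 T))
    (hs0 : s 0 = 0) (hs'0 : s' 0 = σ)
    (heq : ∀ t ∈ Ico (0:ℝ) T, s'' t = 2 * s t ^ 3 + t * s t) :
    ∀ τ, 0 < τ → τ < T → T ≤ τ + 1 / s τ := by
  have h0 : (0:ℝ) ∈ Ico 0 T := ⟨le_rfl, hT⟩
  have hP : ∀ t ∈ Ico (0:ℝ) T, 0 ≤ s t * s' t := by
    intro t ht
    have := painleveII_mono_aux 0 T (fun t => s t * s' t) _
      (fun t ht => (hderiv1 t ht).mul (hderiv2 t ht))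
      (fun t ht => by
        have h1 := ht.1
        rw [heq t ht]
        have : s' t * s' t + s t * (2 * s t ^ 3 + t * s t)
          = s' t ^ 2 + 2 * (s t ^ 2) ^ 2 + t * s t ^ 2 := by ring
        rw [this]; positivity) h0 ht ht.1
    simpa [hs0] using this
  have hE : ∀ t ∈ Ico (0:ℝ) T, σ ^ 2 ≤ s' t ^ 2 - s t ^ 4 := by
    intro t ht
    have := painleveII_mono_aux 0 T (fun t => s' t ^ 2 - s t ^ 4) _
      (fun t ht => ((hderiv2 t ht).fun_pow 2).fun_sub ((hderiv1 t ht).fun_pow 4))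
      (fun t ht => by
        have h1 := mul_nonneg ht.1 (hP t ht)
        rw [heq t ht]
        norm_num
        nlinarith) h0 ht ht.1
    simpa [hs0, hs'0] using this
  have hc' : ContinuousOn s' (Ico 0 T) := fun t ht => (hderiv2 t ht).continuousWithinAt
  have hs'pos : ∀ t ∈ Ico (0:ℝ) T, 0 < s' t := by
    intro t ht
    by_contra hn
    push Not at hn
    obtain ⟨x, hx, hx0⟩ := isPreconnected_Ico.intermediate_value ht h0 hc'
      (show (0:ℝ) ∈ Icc (s' t) (s' 0) from ⟨hn, by rw [hs'0]; exact hσ.le⟩)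
    have := hE x hx
    rw [hx0] at this
    have h4 : 0 ≤ s x ^ 4 := by positivity
    nlinarith [pow_pos hσ 2]
  have hsmono : StrictMonoOn s (Ico 0 T) := by
    apply strictMonoOn_of_hasDerivWithinAt_pos (f' := s') (convex_Ico 0 T)
    · exact fun t ht => (hderiv1 t ht).continuousWithinAt
    · exact fun t ht => (hderiv1 t (interior_subset ht)).mono interior_subset
    · exact fun t ht => hs'pos t (interior_subset ht)
  have hspos : ∀ t ∈ Ico (0:ℝ) T, 0 < t → 0 < s t := by
    intro t ht h
    have := hsmono h0 ht h
    rwa [hs0] at this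
  intro τ hτ hτT
  have hsub : Ico τ T ⊆ Ico 0 T := Ico_subset_Ico_left hτ.le
  have hτm : τ ∈ Ico τ T := ⟨le_rfl, hτT⟩
  have hkey : ∀ t ∈ Ico τ T, t ≤ τ + 1 / s τ := by
    intro t ht
    have hmon := painleveII_mono_aux τ T (fun t => -(s t)⁻¹ - t) _
      (fun t ht => (((hderiv1 t (hsub ht)).mono hsub).fun_inv
        (hspos t (hsub ht) (hτ.trans_le ht.1)).ne').fun_neg.fun_sub (hasDerivWithinAt_id t _))
      (fun t ht => by
        have hp := hspos t (hsub ht) (hτ.trans_le ht.1)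
        have he := hE t (hsub ht)
        have h1 : s t ^ 2 ≤ s' t := by
          refine abs_le_of_sq_le_sq' (by nlinarith [sq_nonneg σ]) (hs'pos t (hsub ht)).le |>.2
        have : 1 ≤ s' t / s t ^ 2 := by rwa [one_le_div (by positivity)]
        rw [neg_div, neg_neg]; linarith) hτm ht ht.1
    have hi := inv_pos.2 (hspos t (hsub ht) (hτ.trans_le ht.1))
    simp only [one_div]
    simp only at hmon
    linarith
  by_contra hn
  push Not at hn
  have hpos := hspos τ (hsub hτm) hτ
  have hi : 0 < 1 / s τ := by positivity
  have := hkey ((τ + 1 / s τ + T) / 2) ⟨by linarith, by linarith⟩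
  linarith
end

section
/- Let σ > 0, let T > 0, and let s : ℝ → ℝ be twice continuously differentiable on [0,T) with s(0) = 0, s'(0) = σ, and s''(t) = 2 s(t)³ + t s(t) for all t ∈ [0,T). Then T < 2/√σ. (The blow-up time t∞ of the maximal solution satisfies t∞ < 2/√σ.) -/
open Set MeasureTheory intervalIntegral Real

lemma mono_aux (b T : ℝ) (f f' : ℝ → ℝ)
    (h : ∀ t ∈ Ico b T, HasDerivWithinAt f (f' t) (Ico b T) t)
    (h0 : ∀ t ∈ Ico b T, 0 ≤ f' t) : MonotoneOn f (Ico b T) := by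
  refine monotoneOn_of_hasDerivWithinAt_nonneg (f' := f') (convex_Ico b T)
    (fun t ht => (h t ht).continuousWithinAt) ?_ ?_
  · intro x hx
    exact (h x (interior_subset hx)).mono interior_subset
  · intro x hx
    exact h0 x (interior_subset hx)

lemma strictMono_aux (b T : ℝ) (f f' : ℝ → ℝ)
    (h : ∀ t ∈ Ico b T, HasDerivWithinAt f (f' t) (Ico b T) t)
    (h0 : ∀ t ∈ Ioo b T, 0 < f' t) : StrictMonoOn f (Ico b T) := by
  refine strictMonoOn_of_hasDerivWithinAt_pos (f' := f') (convex_Ico b T)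
    (fun t ht => (h t ht).continuousWithinAt) ?_ ?_
  · intro x hx
    exact (h x (interior_subset hx)).mono interior_subset
  · intro x hx
    rw [interior_Ico] at hx
    exact h0 x hx

theorem painleveII_blowup_time_upper (σ T : ℝ) (hσ : 0 < σ) (hT : 0 < T) (s s' s'' : ℝ → ℝ)
    (hderiv1 : ∀ t ∈ Ico (0:ℝ) T, HasDerivWithinAt s (s' t) (Ico 0 T) t)
    (hderiv2 : ∀ t ∈ Ico (0:ℝ) T, HasDerivWithinAt s' (s'' t) (Ico 0 T) t)
    (hcont : ContinuousOn s'' (Ico 0 T))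
    (hs0 : s 0 = 0) (hs'0 : s' 0 = σ)
    (heq : ∀ t ∈ Ico (0:ℝ) T, s'' t = 2 * s t ^ 3 + t * s t) :
    T < 2 / Real.sqrt σ := by
  have h0 : (0:ℝ) ∈ Ico 0 T := ⟨le_rfl, hT⟩
  have hp : ∀ t ∈ Ico (0:ℝ) T, 0 ≤ s t * s' t := by
    intro t ht
    have := mono_aux 0 T (fun t => s t * s' t) _
      (fun t ht => (hderiv1 t ht).mul (hderiv2 t ht)) (by
        intro t ht
        rw [heq t ht]
        have h1 := mul_nonneg ht.1 (sq_nonneg (s t))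
        nlinarith [sq_nonneg (s' t), sq_nonneg (s t ^ 2)]) h0 ht ht.1
    simpa [hs0] using this
  have hsq : ∀ t ∈ Ico (0:ℝ) T, σ ^ 2 ≤ s' t ^ 2 := by
    intro t ht
    have := mono_aux 0 T (fun t => s' t ^ 2) _
      (fun t ht => (hderiv2 t ht).pow 2) (by
        intro t ht
        rw [heq t ht]
        have h1 := mul_nonneg (hp t ht) (add_nonneg ht.1 (sq_nonneg (s t)))
        have h2 := mul_nonneg (hp t ht) (sq_nonneg (s t))
        norm_num
        nlinarith) h0 ht ht.1
    simpa [hs'0] using this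
  have hpos : ∀ t ∈ Ico (0:ℝ) T, 0 < s' t := by
    intro t ht
    by_contra hn
    have hc : ContinuousOn s' (Icc 0 t) := fun x hx =>
      (hderiv2 x ⟨hx.1, hx.2.trans_lt ht.2⟩).continuousWithinAt.mono
        (fun y hy => ⟨hy.1, hy.2.trans_lt ht.2⟩)
    obtain ⟨x, hx, hx0⟩ := intermediate_value_Icc' ht.1 hc
      (show (0:ℝ) ∈ Icc (s' t) (s' 0) from ⟨not_lt.1 hn, by rw [hs'0]; exact hσ.le⟩)
    have := hsq x ⟨hx.1, hx.2.trans_lt ht.2⟩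
    rw [hx0] at this
    nlinarith
  have hspos : ∀ t ∈ Ioo (0:ℝ) T, 0 < s t := by
    intro t ht
    have := strictMono_aux 0 T s s' hderiv1 (fun t ht => hpos t ⟨ht.1.le, ht.2⟩) h0
      ⟨ht.1.le, ht.2⟩ ht.1
    rwa [hs0] at this
  have hE : ∀ t ∈ Ico (0:ℝ) T, σ ^ 2 + s t ^ 4 ≤ s' t ^ 2 := by
    intro t ht
    have := mono_aux 0 T (fun t => s' t ^ 2 - s t ^ 4) _
      (fun t ht => ((hderiv2 t ht).pow 2).sub ((hderiv1 t ht).pow 4)) (by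
        intro t ht
        rw [heq t ht]
        have h1 := mul_nonneg (hp t ht) ht.1
        norm_num
        nlinarith) h0 ht ht.1
    simp [hs'0, hs0] at this
    linarith
  have hσ' : ∀ t ∈ Ioo (0:ℝ) T, σ < s' t := by
    intro t ht
    have h1 := hE t ⟨ht.1.le, ht.2⟩
    have h2 := pow_pos (hspos t ht) 4
    exact lt_of_pow_lt_pow_left₀ 2 (hpos t ⟨ht.1.le, ht.2⟩).le (by linarith)
  have hs2 : ∀ t ∈ Ico (0:ℝ) T, s t ^ 2 ≤ s' t := by
    intro t ht
    have h1 := hE t ht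
    exact le_of_sq_le_sq (by nlinarith [sq_nonneg σ]) (hpos t ht).le
  have hlin : ∀ t ∈ Ioo (0:ℝ) T, σ * t < s t := by
    intro t ht
    have := strictMono_aux 0 T (fun t => s t - σ * t) _
      (fun t ht => (hderiv1 t ht).sub ((hasDerivWithinAt_id t _).const_mul σ))
      (fun t ht => by have := hσ' t ht; linarith) h0
      ⟨ht.1.le, ht.2⟩ ht.1
    simp [hs0] at this
    linarith
  by_contra hcon
  have hTge := not_lt.1 hcon
  set a := Real.sqrt σ with ha
  have hapos : 0 < a := Real.sqrt_pos.2 hσ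
  have haa : a * a = σ := Real.mul_self_sqrt hσ.le
  have hb : 0 < 1 / a := by positivity
  have h2a : 2 / a = 1 / a + 1 / a := by ring
  have hbT : 1 / a < T := by linarith
  have hsb : a < s (1 / a) := by
    have := hlin (1 / a) ⟨hb, hbT⟩
    rw [← haa] at this
    field_simp at this
    simpa using this
  have hinv : 1 / s (1 / a) < 1 / a := one_div_lt_one_div_of_lt hapos hsb
  have hinv0 : 0 < 1 / s (1 / a) := one_div_pos.2 (hapos.trans hsb)
  set c := 1 / a + 1 / s (1 / a) with hc
  have hcm : c ∈ Ico (1 / a) T := ⟨by linarith, by linarith⟩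
  have hsub : Ico (1 / a) T ⊆ Ico 0 T := fun x hx => ⟨hb.le.trans hx.1, hx.2⟩
  have hsp : ∀ t ∈ Ico (1 / a) T, 0 < s t := fun t ht => hspos t ⟨hb.trans_le ht.1, ht.2⟩
  have := mono_aux (1 / a) T (fun t => -(s t)⁻¹ - t) _
    (fun t ht => ((((hderiv1 t (hsub ht)).mono hsub).inv (hsp t ht).ne').neg).sub
      (hasDerivWithinAt_id t _)) (by
      intro t ht
      have h1 := hs2 t (hsub ht)
      have h2 := pow_pos (hsp t ht) 2
      have : 1 ≤ s' t / s t ^ 2 := by rwa [one_le_div h2]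
      rw [neg_div, neg_neg]
      linarith) ⟨le_rfl, hbT⟩ hcm hcm.1
  have h3 := inv_pos.2 (hsp c hcm)
  simp only [one_div] at *
  linarith
end

section
/- Let σ > 0, let T > 0, and let s : ℝ → ℝ be twice continuously differentiable on [0,T) with s(0) = 0, s'(0) = σ, and s''(t) = 2 s(t)³ + t s(t) for all t ∈ [0,T). Then for every t with 0 < t < T one has t < ∫₀^{s(t)} du / √(σ² + u⁴). -/
open Set MeasureTheory intervalIntegral Real

theorem painleveII_time_lt_integral (σ T : ℝ) (hσ : 0 < σ) (hT : 0 < T) (s s' s'' : ℝ → ℝ)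
    (hderiv1 : ∀ t ∈ Ico (0:ℝ) T, HasDerivWithinAt s (s' t) (Ico 0 T) t)
    (hderiv2 : ∀ t ∈ Ico (0:ℝ) T, HasDerivWithinAt s' (s'' t) (Ico 0 T) t)
    (hcont : ContinuousOn s'' (Ico 0 T))
    (hs0 : s 0 = 0) (hs'0 : s' 0 = σ)
    (heq : ∀ t ∈ Ico (0:ℝ) T, s'' t = 2 * s t ^ 3 + t * s t) :
    ∀ t, 0 < t → t < T →
      t < ∫ u in (0:ℝ)..(s t), 1 / Real.sqrt (σ ^ 2 + u ^ 4) := by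
  have h0 : (0:ℝ) ∈ Ico (0:ℝ) T := ⟨le_rfl, hT⟩
  have hconv : Convex ℝ (Ico (0:ℝ) T) := convex_Ico 0 T
  have hsub : interior (Ico (0:ℝ) T) ⊆ Ico 0 T := interior_subset
  have hint : ∀ x ∈ interior (Ico (0:ℝ) T), 0 < x := by
    intro x hx
    rw [interior_Ico] at hx
    exact hx.1
  -- generic monotonicity principles
  have mono : ∀ f f' : ℝ → ℝ, (∀ x ∈ Ico (0:ℝ) T, HasDerivWithinAt f (f' x) (Ico 0 T) x) →
      (∀ x ∈ Ico (0:ℝ) T, 0 ≤ f' x) → ∀ x ∈ Ico (0:ℝ) T, f 0 ≤ f x := by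
    intro f f' hf hf' x hx
    exact monotoneOn_of_hasDerivWithinAt_nonneg hconv (fun y hy => (hf y hy).continuousWithinAt)
      (fun y hy => (hf y (hsub hy)).mono hsub) (fun y hy => hf' y (hsub hy)) h0 hx hx.1
  have smono : ∀ f f' : ℝ → ℝ, (∀ x ∈ Ico (0:ℝ) T, HasDerivWithinAt f (f' x) (Ico 0 T) x) →
      (∀ x ∈ Ico (0:ℝ) T, 0 < x → 0 < f' x) → ∀ x ∈ Ico (0:ℝ) T, 0 < x → f 0 < f x := by
    intro f f' hf hf' x hx hx0
    exact strictMonoOn_of_hasDerivWithinAt_pos hconv (fun y hy => (hf y hy).continuousWithinAt)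
      (fun y hy => (hf y (hsub hy)).mono hsub) (fun y hy => hf' y (hsub hy) (hint y hy)) h0 hx hx0
  have hss : ∀ x ∈ Ico (0:ℝ) T, 0 ≤ s x * s' x := by
    intro x hx
    have := mono (fun t => s t * s' t) (fun t => s' t * s' t + s t * s'' t)
      (fun y hy => (hderiv1 y hy).mul (hderiv2 y hy)) (by
        intro y hy
        rw [heq y hy]
        have h1 : 0 ≤ y := hy.1
        have : s' y * s' y + s y * (2 * s y ^ 3 + y * s y)
          = s' y ^ 2 + 2 * s y ^ 4 + y * s y ^ 2 := by ring
        simp only [this]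
        positivity) x hx
    simpa [hs0] using this
  have hE : ∀ y ∈ Ico (0:ℝ) T, HasDerivWithinAt (fun t => s' t ^ 2 - s t ^ 4)
      (2 * y * (s y * s' y)) (Ico 0 T) y := by
    intro y hy
    have := ((hderiv2 y hy).pow 2).sub ((hderiv1 y hy).pow 4)
    refine this.congr_deriv ?_
    rw [heq y hy]
    push_cast
    ring
  have hE0 : ∀ x ∈ Ico (0:ℝ) T, σ ^ 2 ≤ s' x ^ 2 - s x ^ 4 := by
    intro x hx
    have := mono _ _ hE (fun y hy => mul_nonneg (mul_nonneg zero_le_two hy.1) (hss y hy)) x hx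
    simpa [hs0, hs'0] using this
  have hpos : ∀ x ∈ Ico (0:ℝ) T, 0 < s' x := by
    intro x hx
    by_contra hneg
    push Not at hneg
    have hc : ContinuousOn s' (Icc 0 x) := fun y hy =>
      ((hderiv2 y ⟨hy.1, hy.2.trans_lt hx.2⟩).continuousWithinAt).mono
        (fun z hz => ⟨hz.1, hz.2.trans_lt hx.2⟩)
    obtain ⟨z, hz, hz0⟩ := intermediate_value_Icc' hx.1 hc
      (show (0:ℝ) ∈ Icc (s' x) (s' 0) from ⟨hneg, by rw [hs'0]; exact hσ.le⟩)
    have := hE0 z ⟨hz.1, hz.2.trans_lt hx.2⟩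
    rw [hz0] at this
    have h1 : 0 < σ ^ 2 := by positivity
    have h2 : 0 ≤ s z ^ 4 := by positivity
    linarith
  have hspos : ∀ x ∈ Ico (0:ℝ) T, 0 < x → 0 < s x := by
    intro x hx hx0
    have := smono s s' hderiv1 (fun y hy _ => hpos y hy) x hx hx0
    rwa [hs0] at this
  have hE1 : ∀ x ∈ Ico (0:ℝ) T, 0 < x → σ ^ 2 + s x ^ 4 < s' x ^ 2 := by
    intro x hx hx0
    have := smono _ _ hE (fun y hy hy0 =>
      mul_pos (mul_pos two_pos hy0) (mul_pos (hspos y hy hy0) (hpos y hy))) x hx hx0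
    simp only [hs0, hs'0] at this
    linarith
  have hgc : Continuous (fun u : ℝ => 1 / Real.sqrt (σ ^ 2 + u ^ 4)) := by
    refine continuous_const.div (by fun_prop) (fun u => ?_)
    positivity
  intro t ht htT
  have key := smono (fun t => (∫ u in (0:ℝ)..(s t), 1 / Real.sqrt (σ ^ 2 + u ^ 4)) - t)
    (fun t => 1 / Real.sqrt (σ ^ 2 + s t ^ 4) * s' t - 1) (by
      intro y hy
      have h1 := (hgc.integral_hasStrictDerivAt 0 (s y)).hasDerivAt
      exact (h1.comp_hasDerivWithinAt y (hderiv1 y hy)).sub (hasDerivWithinAt_id y _)) (by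
      intro y hy hy0
      have h1 : 0 < Real.sqrt (σ ^ 2 + s y ^ 4) := by positivity
      have h2 : Real.sqrt (σ ^ 2 + s y ^ 4) < s' y := by
        rw [Real.sqrt_lt' (hpos y hy)]
        exact hE1 y hy hy0
      have h3 : 1 < s' y / Real.sqrt (σ ^ 2 + s y ^ 4) := (one_lt_div h1).2 h2
      have h4 : 1 / Real.sqrt (σ ^ 2 + s y ^ 4) * s' y
        = s' y / Real.sqrt (σ ^ 2 + s y ^ 4) := by ring
      simp only [h4]
      linarith) t ⟨ht.le, htT⟩ ht
  simp only [hs0, intervalIntegral.integral_same] at key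
  linarith
end

section
/- Let σ > 0, let T > 0, and let s : ℝ → ℝ be twice continuously differentiable on [0,T) with s(0) = 0, s'(0) = σ, and s''(t) = 2 s(t)³ + t s(t) for all t ∈ [0,T). Then for every t with 0 < t < T one has s'(t)² < σ² + s(t)⁴ + 2 s(t)³/(3σ). -/
open Set MeasureTheory intervalIntegral Real

theorem pII_aux_strict {T : ℝ} {f f' : ℝ → ℝ}
    (h : ∀ t ∈ Ico (0:ℝ) T, HasDerivWithinAt f (f' t) (Ico 0 T) t)
    (hp : ∀ t ∈ Ioo (0:ℝ) T, 0 < f' t) {t : ℝ} (h0 : 0 < t) (hT : t < T) : f 0 < f t := by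
  have hm : StrictMonoOn f (Ico 0 T) := by
    refine strictMonoOn_of_hasDerivWithinAt_pos (f' := f') (convex_Ico 0 T)
      (fun x hx => (h x hx).continuousWithinAt) ?_ ?_
    · intro x hx
      exact (h x (interior_subset hx)).mono interior_subset
    · intro x hx
      rw [interior_Ico] at hx
      exact hp x hx
  exact hm ⟨le_rfl, h0.trans hT⟩ ⟨h0.le, hT⟩ h0

theorem pII_aux_mono {T : ℝ} {f f' : ℝ → ℝ}
    (h : ∀ t ∈ Ico (0:ℝ) T, HasDerivWithinAt f (f' t) (Ico 0 T) t)
    (hp : ∀ t ∈ Ioo (0:ℝ) T, 0 ≤ f' t) {t : ℝ} (h0 : 0 ≤ t) (hT : t < T) : f 0 ≤ f t := by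
  have hm : MonotoneOn f (Ico 0 T) := by
    refine monotoneOn_of_hasDerivWithinAt_nonneg (f' := f') (convex_Ico 0 T)
      (fun x hx => (h x hx).continuousWithinAt) ?_ ?_
    · intro x hx
      exact (h x (interior_subset hx)).mono interior_subset
    · intro x hx
      rw [interior_Ico] at hx
      exact hp x hx
  exact hm ⟨le_rfl, h0.trans_lt hT⟩ ⟨h0, hT⟩ h0

theorem painleveII_first_integral_upper (σ T : ℝ) (hσ : 0 < σ) (hT : 0 < T) (s s' s'' : ℝ → ℝ)
    (hderiv1 : ∀ t ∈ Ico (0:ℝ) T, HasDerivWithinAt s (s' t) (Ico 0 T) t)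
    (hderiv2 : ∀ t ∈ Ico (0:ℝ) T, HasDerivWithinAt s' (s'' t) (Ico 0 T) t)
    (hcont : ContinuousOn s'' (Ico 0 T))
    (hs0 : s 0 = 0) (hs'0 : s' 0 = σ)
    (heq : ∀ t ∈ Ico (0:ℝ) T, s'' t = 2 * s t ^ 3 + t * s t) :
    ∀ t, 0 < t → t < T →
      s' t ^ 2 < σ ^ 2 + s t ^ 4 + 2 * s t ^ 3 / (3 * σ) := by
  have h1 : ∀ t ∈ Ico (0:ℝ) T, 0 ≤ s t * s' t := by
    intro t ht
    have := pII_aux_mono (f := fun x => s x * s' x) (f' := fun x => s' x * s' x + s x * s'' x)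
      (fun x hx => (hderiv1 x hx).mul (hderiv2 x hx)) (fun x hx => by
        have hx0 : 0 < x := hx.1
        have e : s' x * s' x + s x * s'' x = s' x ^ 2 + 2 * s x ^ 4 + x * s x ^ 2 := by
          rw [heq x ⟨hx.1.le, hx.2⟩]; ring
        show 0 ≤ s' x * s' x + s x * s'' x
        rw [e]; positivity) ht.1 ht.2
    simpa [hs0] using this
  have h2 : ∀ t ∈ Ico (0:ℝ) T, σ ^ 2 ≤ s' t * s' t := by
    intro t ht
    have := pII_aux_mono (f := fun x => s' x * s' x) (f' := fun x => s'' x * s' x + s' x * s'' x)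
      (fun x hx => (hderiv2 x hx).mul (hderiv2 x hx)) (fun x hx => by
        have hx0 : 0 < x := hx.1
        have hx' : x ∈ Ico (0:ℝ) T := ⟨hx.1.le, hx.2⟩
        have e : s'' x * s' x + s' x * s'' x = 2 * (2 * s x ^ 2 + x) * (s x * s' x) := by
          rw [heq x hx']; ring
        show 0 ≤ s'' x * s' x + s' x * s'' x
        rw [e]
        have := h1 x hx'
        positivity) ht.1 ht.2
    simpa [hs'0, sq] using this
  have h3 : ∀ t ∈ Ico (0:ℝ) T, 0 < s' t := by
    intro t ht
    by_contra! hneg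
    have hc : ContinuousOn s' (Icc 0 t) := fun x hx =>
      ((hderiv2 x ⟨hx.1, hx.2.trans_lt ht.2⟩).continuousWithinAt).mono
        (fun y hy => ⟨hy.1, hy.2.trans_lt ht.2⟩)
    obtain ⟨c, hc1, hc2⟩ := intermediate_value_Icc' ht.1 hc ⟨hneg, by rw [hs'0]; exact hσ.le⟩
    have := h2 c ⟨hc1.1, hc1.2.trans_lt ht.2⟩
    rw [hc2] at this
    nlinarith [pow_pos hσ 2]
  have h4 : ∀ t ∈ Ioo (0:ℝ) T, 0 < s t := by
    intro t ht
    have := pII_aux_strict hderiv1 (fun x hx => h3 x ⟨hx.1.le, hx.2⟩) ht.1 ht.2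
    rwa [hs0] at this
  have h5 : ∀ t ∈ Ioo (0:ℝ) T, σ < s' t := by
    intro t ht
    have := pII_aux_strict hderiv2 (fun x hx => by
      rw [heq x ⟨hx.1.le, hx.2⟩]
      have := h4 x hx
      have := hx.1
      positivity) ht.1 ht.2
    rwa [hs'0] at this
  have h6 : ∀ t ∈ Ioo (0:ℝ) T, σ * t < s t := by
    intro t ht
    have := pII_aux_strict (f := fun x => s x - σ * x) (f' := fun x => s' x - σ * 1)
      (fun x hx => (hderiv1 x hx).sub ((hasDerivWithinAt_id x _).const_mul σ))
      (fun x hx => by have := h5 x hx; linarith) ht.1 ht.2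
    simp only [hs0] at this
    linarith
  intro t ht0 htT
  have key := pII_aux_strict
    (f := fun x => s x ^ 4 + 2 / (3 * σ) * s x ^ 3 - s' x ^ 2)
    (f' := fun x => (4:ℕ) * s x ^ (4 - 1) * s' x + 2 / (3 * σ) * ((3:ℕ) * s x ^ (3 - 1) * s' x)
      - (2:ℕ) * s' x ^ (2 - 1) * s'' x)
    (fun x hx => (((hderiv1 x hx).pow 4).add (((hderiv1 x hx).pow 3).const_mul _)).sub
      ((hderiv2 x hx).pow 2))
    (fun x hx => by
      have hx' : x ∈ Ico (0:ℝ) T := ⟨hx.1.le, hx.2⟩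
      have e : (4:ℕ) * s x ^ (4 - 1) * s' x + 2 / (3 * σ) * ((3:ℕ) * s x ^ (3 - 1) * s' x)
          - (2:ℕ) * s' x ^ (2 - 1) * s'' x = 2 / σ * s x * s' x * (s x - σ * x) := by
        rw [heq x hx']; push_cast; field_simp; ring
      show 0 < (4:ℕ) * s x ^ (4 - 1) * s' x + 2 / (3 * σ) * ((3:ℕ) * s x ^ (3 - 1) * s' x)
          - (2:ℕ) * s' x ^ (2 - 1) * s'' x
      rw [e]
      have a := h4 x hx
      have b := h3 x hx'
      have c := sub_pos.2 (h6 x hx)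
      positivity) ht0 htT
  have e : 2 * s t ^ 3 / (3 * σ) = 2 / (3 * σ) * s t ^ 3 := by ring
  simp only [hs0, hs'0] at key
  rw [e]
  linarith
end

section
/- Let σ > 0, let T > 0, and let s : ℝ → ℝ be twice continuously differentiable on [0,T) with s(0) = 0, s'(0) = σ, and s''(t) = 2 s(t)³ + t s(t) for all t ∈ [0,T). Then for every t with 0 < t < T one has t > ∫₀^{s(t)} du / √(u⁴ + σ² + 2u³/(3σ)). -/
open Set MeasureTheory intervalIntegral Real

lemma aux_strict {T : ℝ} {f f' : ℝ → ℝ}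
    (h : ∀ t ∈ Ico (0:ℝ) T, HasDerivWithinAt f (f' t) (Ico 0 T) t)
    (hp : ∀ t ∈ Ioo (0:ℝ) T, 0 < f' t) : StrictMonoOn f (Ico 0 T) := by
  refine strictMonoOn_of_deriv_pos (convex_Ico 0 T) (fun t ht => (h t ht).continuousWithinAt) ?_
  intro t ht
  rw [interior_Ico] at ht
  rw [((h t (Ioo_subset_Ico_self ht)).hasDerivAt (Ico_mem_nhds ht.1 ht.2)).deriv]
  exact hp t ht

lemma aux_mono {T : ℝ} {f f' : ℝ → ℝ}
    (h : ∀ t ∈ Ico (0:ℝ) T, HasDerivWithinAt f (f' t) (Ico 0 T) t)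
    (hp : ∀ t ∈ Ioo (0:ℝ) T, 0 ≤ f' t) : MonotoneOn f (Ico 0 T) := by
  refine monotoneOn_of_hasDerivWithinAt_nonneg (f' := f') (convex_Ico 0 T)
    (fun t ht => (h t ht).continuousWithinAt) ?_ ?_
  · intro t ht
    exact (h t (interior_subset ht)).mono interior_subset
  · intro t ht
    rw [interior_Ico] at ht
    exact hp t ht

theorem painleveII_time_gt_integral (σ T : ℝ) (hσ : 0 < σ) (hT : 0 < T) (s s' s'' : ℝ → ℝ)
    (hderiv1 : ∀ t ∈ Ico (0:ℝ) T, HasDerivWithinAt s (s' t) (Ico 0 T) t)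
    (hderiv2 : ∀ t ∈ Ico (0:ℝ) T, HasDerivWithinAt s' (s'' t) (Ico 0 T) t)
    (hcont : ContinuousOn s'' (Ico 0 T))
    (hs0 : s 0 = 0) (hs'0 : s' 0 = σ)
    (heq : ∀ t ∈ Ico (0:ℝ) T, s'' t = 2 * s t ^ 3 + t * s t) :
    ∀ t, 0 < t → t < T →
      (∫ u in (0:ℝ)..(s t), 1 / Real.sqrt (u ^ 4 + σ ^ 2 + 2 * u ^ 3 / (3 * σ))) < t := by
  have h0 : (0:ℝ) ∈ Ico 0 T := ⟨le_rfl, hT⟩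
  have m1 : ∀ t ∈ Ico (0:ℝ) T, 0 ≤ s t * s' t := by
    intro t ht
    have := aux_mono (fun t ht => (hderiv1 t ht).mul (hderiv2 t ht)) (by
      intro t ht
      rw [heq t (Ioo_subset_Ico_self ht)]
      have := ht.1
      have e : s' t * s' t + s t * (2 * s t ^ 3 + t * s t)
        = s' t ^ 2 + 2 * (s t ^ 2) ^ 2 + t * s t ^ 2 := by ring
      rw [e]; positivity) h0 ht ht.1
    simpa [hs0] using this
  have m2 : ∀ t ∈ Ico (0:ℝ) T, σ ^ 2 ≤ s' t ^ 2 := by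
    intro t ht
    have := aux_mono (fun t ht => (hderiv2 t ht).pow 2) (by
      intro t ht
      rw [heq t (Ioo_subset_Ico_self ht)]
      have h1 := m1 t (Ioo_subset_Ico_self ht)
      have := ht.1
      have e : ((2:ℕ):ℝ) * s' t ^ (2 - 1) * (2 * s t ^ 3 + t * s t)
        = (s t * s' t) * (4 * s t ^ 2 + 2 * t) := by norm_num; ring
      rw [e]; positivity) h0 ht ht.1
    simpa [hs'0] using this
  have m3 : ∀ t ∈ Ico (0:ℝ) T, 0 < s' t := by
    intro t ht
    by_contra hneg
    push Not at hneg
    have hc : ContinuousOn s' (Ico 0 T) := fun t ht => (hderiv2 t ht).continuousWithinAt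
    obtain ⟨c, hc, hc0⟩ := isPreconnected_Ico.intermediate_value ht h0 hc
      (show (0:ℝ) ∈ Icc (s' t) (s' 0) from ⟨hneg, by rw [hs'0]; exact hσ.le⟩)
    have := m2 c hc
    rw [hc0] at this
    nlinarith [sq_pos_of_pos hσ]
  have m4 : ∀ t ∈ Ioo (0:ℝ) T, 0 < s t := by
    intro t ht
    have := aux_strict hderiv1 (fun t ht => m3 t (Ioo_subset_Ico_self ht)) h0
      (Ioo_subset_Ico_self ht) ht.1
    rwa [hs0] at this
  have m5 : ∀ t ∈ Ioo (0:ℝ) T, σ < s' t := by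
    intro t ht
    have := aux_strict hderiv2 (fun t ht => by
      rw [heq t (Ioo_subset_Ico_self ht)]
      have := ht.1
      have := m4 t ht
      positivity) h0 (Ioo_subset_Ico_self ht) ht.1
    rwa [hs'0] at this
  have m6 : ∀ t ∈ Ioo (0:ℝ) T, σ * t < s t := by
    intro t ht
    have := aux_strict (fun t ht => (hderiv1 t ht).sub ((hasDerivWithinAt_id t _).const_mul σ))
      (fun t ht => by
      have := m5 t ht
      linarith) h0 (Ioo_subset_Ico_self ht) ht.1
    simp [hs0] at this
    linarith
  have m7 : ∀ t ∈ Ioo (0:ℝ) T, s' t ^ 2 < s t ^ 4 + σ ^ 2 + 2 * s t ^ 3 / (3 * σ) := by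
    intro t ht
    have := aux_strict (fun t ht => (((hderiv1 t ht).pow 4).add
      (((hderiv1 t ht).pow 3).const_mul (2 / (3 * σ)))).sub ((hderiv2 t ht).pow 2))
      (fun t ht => by
      have h4 := m4 t ht
      have h3 := m3 t (Ioo_subset_Ico_self ht)
      have h6 := m6 t ht
      rw [heq t (Ioo_subset_Ico_self ht)]
      have e : ((4:ℕ):ℝ) * s t ^ (4 - 1) * s' t + 2 / (3 * σ) * (((3:ℕ):ℝ) * s t ^ (3 - 1) * s' t)
        - ((2:ℕ):ℝ) * s' t ^ (2 - 1) * (2 * s t ^ 3 + t * s t)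
        = 2 * s t * s' t * (s t - σ * t) / σ := by
        norm_num; field_simp; ring
      rw [e]
      have : 0 < s t - σ * t := by linarith
      positivity) h0 (Ioo_subset_Ico_self ht) ht.1
    simp [hs0, hs'0] at this
    have e : 2 * s t ^ 3 / (3 * σ) = 2 / (3 * σ) * s t ^ 3 := by ring
    rw [e]; linarith
  set g : ℝ → ℝ := fun u => 1 / Real.sqrt (u ^ 4 + σ ^ 2 + 2 * u ^ 3 / (3 * σ)) with hg
  have gc : ∀ u, 0 ≤ u → ContinuousAt g u := by
    intro u hu
    have : Real.sqrt (u ^ 4 + σ ^ 2 + 2 * u ^ 3 / (3 * σ)) ≠ 0 := by positivity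
    rw [hg]
    fun_prop (disch := exact this)
  have gm : Measurable g := by fun_prop
  have F : ∀ x, 0 ≤ x → HasDerivAt (fun x => ∫ u in (0:ℝ)..x, g u) (g x) x := by
    intro x hx
    refine integral_hasDerivAt_right ?_ gm.stronglyMeasurable.stronglyMeasurableAtFilter (gc x hx)
    apply ContinuousOn.intervalIntegrable
    intro u hu
    rw [uIcc_of_le hx] at hu
    exact (gc u hu.1).continuousWithinAt
  have m8 : ∀ t ∈ Ico (0:ℝ) T, 0 ≤ s t := by
    intro t ht
    rcases ht.1.eq_or_lt with h | h
    · rw [← h, hs0]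
    · exact (m4 t ⟨h, ht.2⟩).le
  intro t ht htT
  have := aux_strict (fun t ht => (hasDerivWithinAt_id t _).sub
    ((F (s t) (m8 t ht)).comp_hasDerivWithinAt t (hderiv1 t ht)))
    (fun t ht => by
      have h7 := m7 t ht
      have h3 := m3 t (Ioo_subset_Ico_self ht)
      have h9 := Real.lt_sqrt_of_sq_lt h7
      have : g (s t) * s' t < 1 := by
        simp only [hg]
        rw [one_div_mul_eq_div, div_lt_one (h3.trans h9)]
        exact h9
      linarith) h0 ⟨ht.le, htT⟩ ht
  simp [hs0] at this
  simpa [hg] using this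
end

section
/- For every σ > 0, the improper real integral ∫₀^∞ du / √(σ² u⁴ + 1 + 2u³/3) is strictly greater than 2/√(σ² + 5/3). -/
open Set MeasureTheory

/-- For every `σ > 0`, `∫₀^∞ du/√(σ²u⁴ + 1 + 2u³/3) > 2/√(σ² + 5/3)`. -/
theorem integral_gt_two_div_sqrt (σ : ℝ) (hσ : 0 < σ) :
    2 / Real.sqrt (σ ^ 2 + 5 / 3) <
      ∫ u in Ioi (0:ℝ), 1 / Real.sqrt (σ ^ 2 * u ^ 4 + 1 + 2 * u ^ 3 / 3) := by
  set f : ℝ → ℝ := fun u => 1 / Real.sqrt (σ ^ 2 * u ^ 4 + 1 + 2 * u ^ 3 / 3) with hf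
  set c : ℝ := Real.sqrt (σ ^ 2 + 5 / 3) with hc
  have hcpos : 0 < c := Real.sqrt_pos.2 (by positivity)
  have hpos : ∀ u : ℝ, 0 ≤ u → 0 < Real.sqrt (σ ^ 2 * u ^ 4 + 1 + 2 * u ^ 3 / 3) :=
    fun u hu => Real.sqrt_pos.2 (by positivity)
  have hcont : ContinuousOn f (Ici 0) := by
    apply ContinuousOn.div continuousOn_const (by fun_prop)
    intro u hu
    exact (hpos u hu).ne'
  have hrp : ∀ u ∈ Ioi (1:ℝ), u ^ (-2:ℝ) = 1 / u ^ 2 := by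
    intro u hu
    have hu0 : (0:ℝ) ≤ u := zero_le_one.trans (le_of_lt hu)
    rw [Real.rpow_neg hu0, one_div]
    norm_num
  have hI2 : IntegrableOn (fun u : ℝ => u ^ (-2:ℝ)) (Ioi 1) :=
    integrableOn_Ioi_rpow_of_lt (by norm_num) one_pos
  have hIf1 : IntegrableOn f (Ioi 1) := by
    refine Integrable.mono' (hI2.const_mul (1 / σ)) ?_ ?_
    · have hsub : Ioi (1:ℝ) ⊆ Ici 0 := fun u hu => mem_Ici.2 (zero_le_one.trans (le_of_lt (mem_Ioi.1 hu)))
      exact (hcont.mono hsub).aestronglyMeasurable measurableSet_Ioi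
    · refine (ae_restrict_iff' measurableSet_Ioi).2 (ae_of_all _ fun u hu => ?_)
      have hu1 : (1:ℝ) < u := hu
      have hu0 : (0:ℝ) < u := by linarith
      rw [hrp u hu, Real.norm_of_nonneg (by positivity), div_mul_div_comm, one_mul]
      apply one_div_le_one_div_of_le (by positivity)
      apply Real.le_sqrt_of_sq_le
      have : 0 < u ^ 3 := by positivity
      nlinarith
  have hIf0 : IntegrableOn f (Ioc 0 1) :=
    ((hcont.mono Icc_subset_Ici_self).integrableOn_Icc).mono_set Ioc_subset_Icc_self
  have hsplit : ∫ u in Ioi (0:ℝ), f u = (∫ u in Ioc (0:ℝ) 1, f u) + ∫ u in Ioi (1:ℝ), f u := by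
    rw [← Ioc_union_Ioi_eq_Ioi (zero_le_one (α := ℝ))]
    exact setIntegral_union (Ioc_disjoint_Ioi le_rfl) measurableSet_Ioi hIf0 hIf1
  have h1 : 1 / c < ∫ u in Ioc (0:ℝ) 1, f u := by
    have := intervalIntegral.integral_lt_integral_of_continuousOn_of_le_of_exists_lt
      (f := fun _ => 1 / c) (g := f) (zero_lt_one (α := ℝ)) continuousOn_const
      (hcont.mono Icc_subset_Ici_self) ?_ ⟨0, by simp, ?_⟩
    · rw [intervalIntegral.integral_of_le zero_le_one (f := f)] at this
      simpa using this
    · intro u hu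
      have hu0 : 0 ≤ u := hu.1.le
      apply one_div_le_one_div_of_le (hpos u hu0)
      apply Real.sqrt_le_sqrt
      have h4 : u ^ 4 ≤ 1 := pow_le_one₀ hu0 hu.2
      have h3 : u ^ 3 ≤ 1 := pow_le_one₀ hu0 hu.2
      nlinarith [sq_nonneg σ]
    · apply one_div_lt_one_div_of_lt (hpos 0 le_rfl)
      apply Real.sqrt_lt_sqrt (by norm_num)
      nlinarith [sq_nonneg σ]
  have h2 : 1 / c ≤ ∫ u in Ioi (1:ℝ), f u := by
    have hv : ∫ u in Ioi (1:ℝ), 1 / c * u ^ (-2:ℝ) = 1 / c := by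
      rw [integral_const_mul, integral_Ioi_rpow_of_lt (by norm_num) one_pos]
      norm_num
    rw [← hv]
    refine setIntegral_mono_on (hI2.const_mul _) hIf1 measurableSet_Ioi fun u hu => ?_
    have hu1 : (1:ℝ) < u := hu
    have hu0 : (0:ℝ) < u := by linarith
    rw [hrp u hu, div_mul_div_comm, one_mul]
    apply one_div_le_one_div_of_le (hpos u hu0.le)
    apply Real.sqrt_le_iff.2 ⟨by positivity, ?_⟩
    rw [mul_pow, hc, Real.sq_sqrt (by positivity)]
    have h4 : 1 ≤ u ^ 4 := one_le_pow₀ hu1.le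
    have h3 : u ^ 3 ≤ u ^ 4 := pow_le_pow_right₀ hu1.le (by norm_num)
    nlinarith
  rw [hsplit]
  have : 2 / c = 1 / c + 1 / c := by ring
  linarith
end

section
/- Let σ > 0, let T > 0, and let s : ℝ → ℝ be twice continuously differentiable on [0,T) with s(0) = 0, s'(0) = σ, and s''(t) = 2 s(t)³ + t s(t) for all t ∈ [0,T). If s(t) tends to +∞ as t tends to T from the left (i.e., s blows up at time T), then T > 2/√(σ² + 5/3). -/
open Set MeasureTheory intervalIntegral Real

theorem painleveII_blowup_time_lower (σ T : ℝ) (hσ : 0 < σ) (hT : 0 < T) (s s' s'' : ℝ → ℝ)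
    (hderiv1 : ∀ t ∈ Ico (0:ℝ) T, HasDerivWithinAt s (s' t) (Ico 0 T) t)
    (hderiv2 : ∀ t ∈ Ico (0:ℝ) T, HasDerivWithinAt s' (s'' t) (Ico 0 T) t)
    (hcont : ContinuousOn s'' (Ico 0 T))
    (hs0 : s 0 = 0) (hs'0 : s' 0 = σ)
    (heq : ∀ t ∈ Ico (0:ℝ) T, s'' t = 2 * s t ^ 3 + t * s t) :
    Filter.Tendsto s (nhdsWithin T (Iio T)) Filter.atTop →
      2 / Real.sqrt (σ ^ 2 + 5 / 3) < T := by
  intro hblow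
  by_contra hcon
  push Not at hcon
  -- the supersolution `w t = 1 / (R - t) - 1 / (R + t)` with `R ^ 2 = 4 / (σ ^ 2 + 3 / 2)`
  obtain ⟨R, hR0, hTR, hR2⟩ : ∃ R : ℝ, 0 < R ∧ T < R ∧ R ^ 2 * (σ ^ 2 + 3 / 2) = 4 := by
    have h1 : 0 < Real.sqrt (σ ^ 2 + 3 / 2) := Real.sqrt_pos.2 (by positivity)
    refine ⟨2 / Real.sqrt (σ ^ 2 + 3 / 2), by positivity, lt_of_le_of_lt hcon ?_, ?_⟩
    · apply div_lt_div_of_pos_left (by norm_num) h1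
      exact Real.sqrt_lt_sqrt (by positivity) (by linarith)
    · rw [div_pow, Real.sq_sqrt (by positivity)]
      field_simp
      norm_num
  have hR83 : R ^ 2 ≤ 8 / 3 := by nlinarith [mul_nonneg (sq_nonneg R) (sq_nonneg σ)]
  have hRlt2 : R < 2 := by nlinarith
  set w : ℝ → ℝ := fun t => (R - t)⁻¹ - (R + t)⁻¹ with hw
  set w' : ℝ → ℝ := fun t => ((R - t) ^ 2)⁻¹ + ((R + t) ^ 2)⁻¹ with hw'
  set w'' : ℝ → ℝ := fun t => 2 * ((R - t) ^ 3)⁻¹ - 2 * ((R + t) ^ 3)⁻¹ with hw''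
  have hwd : ∀ t ∈ Ico (0:ℝ) T, HasDerivAt w (w' t) t := by
    intro t ht
    have ha : R - t ≠ 0 := by linarith [ht.2]
    have hb : R + t ≠ 0 := by linarith [ht.1]
    have e1 := ((hasDerivAt_id t).const_sub R).fun_inv ha
    have e2 := ((hasDerivAt_id t).const_add R).fun_inv hb
    refine (e1.sub e2).congr_deriv ?_
    simp only [hw', id]
    field_simp
    ring
  have hwd2 : ∀ t ∈ Ico (0:ℝ) T, HasDerivAt w' (w'' t) t := by
    intro t ht
    have ha : R - t ≠ 0 := by linarith [ht.2]
    have hb : R + t ≠ 0 := by linarith [ht.1]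
    have e1 := (((hasDerivAt_id t).const_sub R).fun_pow 2).fun_inv (pow_ne_zero 2 ha)
    have e2 := (((hasDerivAt_id t).const_add R).fun_pow 2).fun_inv (pow_ne_zero 2 hb)
    refine (e1.add e2).congr_deriv ?_
    simp only [hw'', id]
    field_simp
    ring
  have hsuper : ∀ t ∈ Ico (0:ℝ) T, 2 * w t ^ 3 + t * w t ≤ w'' t := by
    intro t ht
    have ha : 0 < R - t := by linarith [ht.2]
    have hb : 0 < R + t := by linarith [ht.1]
    have e : w'' t - (2 * w t ^ 3 + t * w t)
        = 2 * t * (6 - t * ((R - t) * (R + t))) / ((R - t) * (R + t)) ^ 2 := by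
      simp only [hw, hw'']
      field_simp
      ring
    have h6 : 0 ≤ 6 - t * ((R - t) * (R + t)) := by
      have := ht.1
      have h2 : t ≤ 2 := by linarith [ht.2]
      nlinarith [mul_nonneg ht.1 (sq_nonneg t), mul_nonneg ht.1 (sub_nonneg.2 hR83)]
    have : 0 ≤ w'' t - (2 * w t ^ 3 + t * w t) := by
      rw [e]
      have := ht.1
      positivity
    linarith
  have hd1 : ∀ t ∈ Ico (0:ℝ) T, HasDerivWithinAt (fun t => w t - s t) (w' t - s' t) (Ico 0 T) t :=
    fun t ht => (hwd t ht).hasDerivWithinAt.sub (hderiv1 t ht)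
  have hd2 : ∀ t ∈ Ico (0:ℝ) T,
      HasDerivWithinAt (fun t => w' t - s' t) (w'' t - s'' t) (Ico 0 T) t :=
    fun t ht => (hwd2 t ht).hasDerivWithinAt.sub (hderiv2 t ht)
  have hc1 : ContinuousOn (fun t => w t - s t) (Ico 0 T) := fun t ht => (hd1 t ht).continuousWithinAt
  have hc2 : ContinuousOn (fun t => w' t - s' t) (Ico 0 T) :=
    fun t ht => (hd2 t ht).continuousWithinAt
  have hw0 : w 0 - s 0 = 0 := by simp [hw, hs0]
  have hw'0 : 0 < w' 0 - s' 0 := by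
    have : w' 0 = (σ ^ 2 + 3 / 2) / 2 := by
      simp only [hw', sub_zero, add_zero]
      field_simp
      linarith
    rw [this, hs'0]
    nlinarith [sq_nonneg (σ - 1)]
  have mono : ∀ τ, 0 ≤ τ → τ < T → (∀ t ∈ Ico (0:ℝ) τ, 0 ≤ w' t - s' t) →
      ∀ t ∈ Icc (0:ℝ) τ, 0 ≤ w t - s t := by
    intro τ h0 hτ hpos t ht
    have hsub : Icc (0:ℝ) τ ⊆ Ico 0 T := fun x hx => ⟨hx.1, hx.2.trans_lt hτ⟩
    have hm : MonotoneOn (fun t => w t - s t) (Icc 0 τ) := by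
      apply monotoneOn_of_hasDerivWithinAt_nonneg (f' := fun t => w' t - s' t) (convex_Icc 0 τ)
        (hc1.mono hsub)
      · intro x hx
        exact (hd1 x (hsub (interior_subset hx))).mono (interior_subset.trans hsub)
      · intro x hx
        rw [interior_Icc] at hx
        exact hpos x ⟨hx.1.le, hx.2⟩
    have := hm ⟨le_rfl, h0⟩ ht ht.1
    simp only [hw0] at this
    exact this
  have key : ∀ t ∈ Ico (0:ℝ) T, 0 < w' t - s' t := by
    intro t1 ht1
    by_contra hneg
    push Not at hneg
    have hsub1 : Icc (0:ℝ) t1 ⊆ Ico 0 T := fun x hx => ⟨hx.1, hx.2.trans_lt ht1.2⟩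
    have hcl : IsClosed (Icc (0:ℝ) t1 ∩ (fun t => w' t - s' t) ⁻¹' Iic 0) :=
      (hc2.mono hsub1).preimage_isClosed_of_isClosed isClosed_Icc isClosed_Iic
    have hcp : IsCompact (Icc (0:ℝ) t1 ∩ (fun t => w' t - s' t) ⁻¹' Iic 0) :=
      isCompact_Icc.of_isClosed_subset hcl inter_subset_left
    obtain ⟨τ, ⟨hτ1, hτ2⟩, hτ3⟩ := hcp.exists_isLeast ⟨t1, ⟨ht1.1, le_rfl⟩, hneg⟩
    have hτT : τ < T := (hsub1 hτ1).2
    have hpos : ∀ t ∈ Ico (0:ℝ) τ, 0 ≤ w' t - s' t := by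
      intro t ht
      by_contra hh
      push Not at hh
      have := hτ3 ⟨⟨ht.1, ht.2.le.trans hτ1.2⟩, hh.le⟩
      linarith [ht.2]
    have hd := mono τ hτ1.1 hτT hpos
    have hsub : Icc (0:ℝ) τ ⊆ Ico 0 T := fun x hx => ⟨hx.1, hx.2.trans_lt hτT⟩
    have hm : MonotoneOn (fun t => w' t - s' t) (Icc 0 τ) := by
      apply monotoneOn_of_hasDerivWithinAt_nonneg (f' := fun t => w'' t - s'' t) (convex_Icc 0 τ)
        (hc2.mono hsub)
      · intro x hx
        exact (hd2 x (hsub (interior_subset hx))).mono (interior_subset.trans hsub)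
      · intro x hx
        have hx1 := interior_subset hx
        have hx2 := hsub hx1
        have h1 := hd x hx1
        have h2 := hsuper x hx2
        rw [heq x hx2]
        have h3 : s x ^ 3 ≤ w x ^ 3 := Odd.pow_le_pow (by decide) |>.2 (by linarith)
        have h4 : x * s x ≤ x * w x := mul_le_mul_of_nonneg_left (by linarith) hx1.1
        linarith
    have h5 := hm ⟨le_rfl, hτ1.1⟩ ⟨hτ1.1, le_rfl⟩ hτ1.1
    have h6 : w' τ - s' τ ≤ 0 := hτ2
    simp only at h5
    linarith
  have hbound : ∀ t ∈ Ico (0:ℝ) T, s t ≤ (R - T)⁻¹ := by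
    intro t ht
    have h1 := mono t ht.1 ht.2 (fun u hu => (key u ⟨hu.1, hu.2.trans ht.2⟩).le) t ⟨ht.1, le_rfl⟩
    have h2 : (R - t)⁻¹ ≤ (R - T)⁻¹ := inv_anti₀ (by linarith) (by linarith [ht.2])
    have h3 : 0 < (R + t)⁻¹ := inv_pos.2 (by linarith [ht.1])
    simp only [hw] at h1
    linarith
  have hev := hblow.eventually_gt_atTop (R - T)⁻¹
  have hev2 : ∀ᶠ t in nhdsWithin T (Iio T), t ∈ Ico (0:ℝ) T := Ico_mem_nhdsLT hT
  obtain ⟨t, h1, h2⟩ := (hev.and hev2).exists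
  linarith [hbound t h2]
end

section
/- Let σ > 0, let T > 0, and let s : ℝ → ℝ be twice continuously differentiable on [0,T) with s(0) = 0, s'(0) = σ, and s''(t) = 2 s(t)³ − t s(t) for all t ∈ [0,T). Then for every τ with 0 < τ < T and τ < 2σ one has s(τ) > τ · √(σ² − τ²/4); moreover s'(t) > 0 for all t ∈ [0,T) with t < 2σ. -/
open Set

/-- For a solution of `s'' = 2s³ − ts` with `s(0) = 0`, `s'(0) = σ > 0`:
`s(τ) > τ√(σ² − τ²/4)` for `0 < τ < min T (2σ)`, and `s' > 0` on `[0, T) ∩ [0, 2σ)`. -/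
theorem painleveIIneg_monotone_bound (σ T : ℝ) (hσ : 0 < σ) (hT : 0 < T) (s s' s'' : ℝ → ℝ)
    (hderiv1 : ∀ t ∈ Ico (0:ℝ) T, HasDerivWithinAt s (s' t) (Ico 0 T) t)
    (hderiv2 : ∀ t ∈ Ico (0:ℝ) T, HasDerivWithinAt s' (s'' t) (Ico 0 T) t)
    (hcont : ContinuousOn s'' (Ico 0 T))
    (hs0 : s 0 = 0) (hs'0 : s' 0 = σ)
    (heq : ∀ t ∈ Ico (0:ℝ) T, s'' t = 2 * s t ^ 3 - t * s t) :
    (∀ τ, 0 < τ → τ < T → τ < 2 * σ → τ * Real.sqrt (σ ^ 2 - τ ^ 2 / 4) < s τ) ∧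
    (∀ t ∈ Ico (0:ℝ) T, t < 2 * σ → 0 < s' t) := by
  have hcs : ContinuousOn s (Ico 0 T) := fun t ht => (hderiv1 t ht).continuousWithinAt
  have hcs' : ContinuousOn s' (Ico 0 T) := fun t ht => (hderiv2 t ht).continuousWithinAt
  have hd1 : ∀ t ∈ Ioo (0:ℝ) T, HasDerivAt s (s' t) t := fun t ht =>
    (hderiv1 t ⟨ht.1.le, ht.2⟩).hasDerivAt (Ico_mem_nhds ht.1 ht.2)
  have hd2 : ∀ t ∈ Ioo (0:ℝ) T, HasDerivAt s' (s'' t) t := fun t ht =>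
    (hderiv2 t ⟨ht.1.le, ht.2⟩).hasDerivAt (Ico_mem_nhds ht.1 ht.2)
  have hF : MonotoneOn (fun t => s' t ^ 2 - s t ^ 4 + t * s t ^ 2) (Ico 0 T) := by
    have hd : ∀ t ∈ Ioo (0:ℝ) T,
        HasDerivAt (fun t => s' t ^ 2 - s t ^ 4 + t * s t ^ 2) (s t ^ 2) t := by
      intro t ht
      have h := (((hd2 t ht).pow 2).sub ((hd1 t ht).pow 4)).add
        ((hasDerivAt_id t).mul ((hd1 t ht).pow 2))
      refine HasDerivAt.congr_deriv h ?_
      rw [heq t ⟨ht.1.le, ht.2⟩]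
      simp
      ring
    apply monotoneOn_of_deriv_nonneg (convex_Ico 0 T)
    · fun_prop
    · rw [interior_Ico]
      exact fun t ht => (hd t ht).differentiableAt.differentiableWithinAt
    · rw [interior_Ico]
      intro t ht
      rw [(hd t ht).deriv]
      positivity
  have hsq : ∀ t ∈ Ico (0:ℝ) T, σ ^ 2 - t ^ 2 / 4 ≤ s' t ^ 2 := by
    intro t ht
    have h := hF (left_mem_Ico.2 hT) ht ht.1
    simp only [hs0, hs'0] at h
    nlinarith [sq_nonneg (s t ^ 2 - t / 2)]
  have hpos : ∀ t ∈ Ico (0:ℝ) T, t < 2 * σ → 0 < s' t := by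
    intro t ht h2
    by_contra hneg
    push Not at hneg
    have hc : ContinuousOn s' (Icc 0 t) :=
      hcs'.mono (fun x hx => ⟨hx.1, hx.2.trans_lt ht.2⟩)
    obtain ⟨u, hu, hu0⟩ := intermediate_value_Icc' ht.1 hc
      (show (0:ℝ) ∈ Icc (s' t) (s' 0) from ⟨hneg, by rw [hs'0]; exact hσ.le⟩)
    have h := hsq u ⟨hu.1, hu.2.trans_lt ht.2⟩
    rw [hu0] at h
    have hu2 : u < 2 * σ := hu.2.trans_lt h2
    nlinarith [hu.1]
  refine ⟨?_, hpos⟩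
  intro τ h0 hτT hτσ
  have hm : StrictMonoOn (fun t => s t - t * Real.sqrt (σ ^ 2 - τ ^ 2 / 4)) (Icc 0 τ) := by
    have hc : ContinuousOn s (Icc 0 τ) :=
      hcs.mono (fun x hx => ⟨hx.1, hx.2.trans_lt hτT⟩)
    apply strictMonoOn_of_deriv_pos (convex_Icc 0 τ)
    · fun_prop
    · rw [interior_Icc]
      intro t ht
      have h := (hd1 t ⟨ht.1, ht.2.trans hτT⟩).sub
        ((hasDerivAt_id t).mul_const (Real.sqrt (σ ^ 2 - τ ^ 2 / 4)))
      have h' : deriv (fun t => s t - t * Real.sqrt (σ ^ 2 - τ ^ 2 / 4)) t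
          = s' t - 1 * Real.sqrt (σ ^ 2 - τ ^ 2 / 4) := h.deriv
      rw [h', one_mul, sub_pos]
      have hp := hpos t ⟨ht.1.le, ht.2.trans hτT⟩ (ht.2.trans hτσ)
      rw [Real.sqrt_lt' hp]
      have := hsq t ⟨ht.1.le, ht.2.trans hτT⟩
      nlinarith [ht.1, ht.2]
  have h := hm (left_mem_Icc.2 h0.le) (right_mem_Icc.2 h0.le) h0
  simp only [hs0] at h
  linarith
end

section
/- Let t₀ > 0 and let s : ℝ → ℝ be twice continuously differentiable on [t₀,∞) with s''(t) = 2 s(t)³ − t s(t) for all t ≥ t₀. It is impossible that both 2 s(t)² − t > 0 and 4 s(t) s'(t) − 1 > 0 hold for all t ≥ t₀. (Equivalently: if r(t) = 2 s(t)² − t satisfies r > 0 and r' > 0 from some time onward, then s undergoes finite-time blow-up and cannot be defined on all of [t₀,∞).) -/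
open Set

theorem mono_aux_s14 (a : ℝ) (f f' : ℝ → ℝ)
    (h : ∀ t ∈ Ici a, HasDerivWithinAt f (f' t) (Ici a) t)
    (h0 : ∀ t ∈ Ici a, 0 ≤ f' t) : ∀ t ∈ Ici a, f a ≤ f t := by
  have hm : MonotoneOn f (Ici a) := by
    apply monotoneOn_of_hasDerivWithinAt_nonneg (f' := f') (convex_Ici a)
    · exact fun t ht => (h t ht).continuousWithinAt
    · exact fun t ht => (h t (interior_subset ht)).mono interior_subset
    · exact fun t ht => h0 t (interior_subset ht)
  exact fun t ht => hm self_mem_Ici ht ht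

theorem blowup_aux (a : ℝ) (r p q : ℝ → ℝ)
    (hr : ∀ t ∈ Ici a, HasDerivWithinAt r (p t) (Ici a) t)
    (hp : ∀ t ∈ Ici a, HasDerivWithinAt p (q t) (Ici a) t)
    (hr0 : ∀ t ∈ Ici a, 0 < r t) (hp0 : ∀ t ∈ Ici a, 0 < p t)
    (hq : ∀ t ∈ Ici a, 2 * r t ^ 2 ≤ q t) : False := by
  have h1 : ∀ t ∈ Ici a, p a ≤ p t :=
    mono_aux_s14 a p q hp (fun t ht => le_trans (by positivity) (hq t ht))
  have h2 : ∀ t ∈ Ici a, r a - p a * a ≤ r t - p a * t := by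
    refine mono_aux_s14 a (fun t => r t - p a * t) (fun t => p t - p a * 1) ?_ ?_
    · intro t ht
      exact (hr t ht).sub ((hasDerivWithinAt_id t _).const_mul (p a))
    · intro t ht
      have := h1 t ht
      linarith
  have h3 : ∀ t ∈ Ici a, 3 * p a ^ 2 - 4 * r a ^ 3 ≤ 3 * p t ^ 2 - 4 * r t ^ 3 := by
    refine mono_aux_s14 a (fun t => 3 * p t ^ 2 - 4 * r t ^ 3)
      (fun t => 6 * p t * (q t - 2 * r t ^ 2)) ?_ ?_
    · intro t ht
      refine HasDerivWithinAt.congr_deriv ((((hp t ht).fun_pow 2).const_mul 3).fun_sub (((hr t ht).fun_pow 3).const_mul 4)) ?_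
      push_cast
      ring
    · intro t ht
      have := hq t ht
      have := hp0 t ht
      apply mul_nonneg (by positivity) (by linarith)
  have hpa := hp0 a self_mem_Ici
  have hra := hr0 a self_mem_Ici
  set K : ℝ := 1 + 4 * r a ^ 3 with hK
  have hK1 : 1 ≤ K := by have : 0 < r a ^ 3 := by positivity
                         linarith
  set T : ℝ := a + K / p a with hT
  have haT : a ≤ T := by have : 0 < K / p a := by positivity
                         linarith
  have hsub : Ici T ⊆ Ici a := Ici_subset_Ici.2 haT
  have h4 : ∀ t ∈ Ici T, r t * √(r t) ≤ p t := by
    intro t ht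
    have hta := hsub ht
    have hrt := hr0 t hta
    have hrK : K ≤ r t := by
      have e : p a * (T - a) = K := by rw [hT]; field_simp; ring
      have := h2 t hta
      have : p a * (T - a) ≤ p a * (t - a) :=
        mul_le_mul_of_nonneg_left (by have := mem_Ici.1 ht; linarith) hpa.le
      linarith
    have hr3 : K ≤ r t ^ 3 := by
      have : r t ^ 1 ≤ r t ^ 3 := pow_le_pow_right₀ (by linarith) (by norm_num)
      linarith
    have := h3 t hta
    refine (pow_le_pow_iff_left₀ (by positivity) (hp0 t hta).le two_ne_zero).1 ?_
    rw [mul_pow, Real.sq_sqrt hrt.le]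
    nlinarith [sq_nonneg (p a)]
  have h5 : ∀ t ∈ Ici T, -(√(r T))⁻¹ - T / 2 ≤ -(√(r t))⁻¹ - t / 2 := by
    refine mono_aux_s14 T (fun t => -(√(r t))⁻¹ - t / 2)
      (fun t => -(-(p t / (2 * √(r t))) / √(r t) ^ 2) - 1 / 2) ?_ ?_
    · intro t ht
      have hrt := hr0 t (hsub ht)
      exact ((((hr t (hsub ht)).mono hsub).sqrt hrt.ne').fun_inv
        (Real.sqrt_pos.2 hrt).ne').fun_neg.fun_sub ((hasDerivWithinAt_id t _).div_const 2)
    · intro t ht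
      have hrt := hr0 t (hsub ht)
      have hs := Real.sqrt_pos.2 hrt
      have := h4 t ht
      have e : -(-(p t / (2 * √(r t))) / √(r t) ^ 2) - 1 / 2
          = (p t - r t * √(r t)) / (2 * (r t * √(r t))) := by
        rw [Real.sq_sqrt hrt.le]
        field_simp
      rw [e]
      exact div_nonneg (by linarith) (by positivity)
  have hi : 0 < (√(r T))⁻¹ := inv_pos.2 (Real.sqrt_pos.2 (hr0 T haT))
  have hm : T + 2 * (√(r T))⁻¹ ∈ Ici T := by rw [mem_Ici]; linarith
  have h6 := h5 _ hm
  have h7 : 0 < (√(r (T + 2 * (√(r T))⁻¹)))⁻¹ :=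
    inv_pos.2 (Real.sqrt_pos.2 (hr0 _ (hsub hm)))
  linarith

/-- A solution of `s'' = 2s³ − ts` on `[t₀,∞)` cannot satisfy both `2s² − t > 0` and
`4ss' − 1 > 0` for all `t ≥ t₀`: the concavity would force finite-time blow-up. -/
theorem painleveIIneg_no_global_convex (t₀ : ℝ) (ht₀ : 0 < t₀) (s s' s'' : ℝ → ℝ)
    (hderiv1 : ∀ t ∈ Ici t₀, HasDerivWithinAt s (s' t) (Ici t₀) t)
    (hderiv2 : ∀ t ∈ Ici t₀, HasDerivWithinAt s' (s'' t) (Ici t₀) t)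
    (hcont : ContinuousOn s'' (Ici t₀))
    (heq : ∀ t ∈ Ici t₀, s'' t = 2 * s t ^ 3 - t * s t) :
    ¬ ∀ t ∈ Ici t₀, 0 < 2 * s t ^ 2 - t ∧ 0 < 4 * s t * s' t - 1 := by
  intro h
  refine blowup_aux t₀ (fun t => 2 * s t ^ 2 - t) (fun t => 4 * s t * s' t - 1)
    (fun t => 4 * s' t ^ 2 + 4 * s t * s'' t) ?_ ?_ (fun t ht => (h t ht).1)
    (fun t ht => (h t ht).2) ?_
  · intro t ht
    refine HasDerivWithinAt.congr_deriv ((((hderiv1 t ht).fun_pow 2).const_mul 2).fun_sub (hasDerivWithinAt_id t _)) ?_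
    push_cast
    ring
  · intro t ht
    refine HasDerivWithinAt.congr_deriv ((((hderiv1 t ht).const_mul 4).fun_mul (hderiv2 t ht)).sub_const 1) ?_
    ring
  · intro t ht
    have hr := (h t ht).1
    have ht' : 0 < t := lt_of_lt_of_le ht₀ ht
    have := mul_pos ht' hr
    simp only [heq t ht]
    nlinarith [sq_nonneg (s' t)]
end

section
/- Let σ ≥ √3/2, let T > 1, and let s : ℝ → ℝ be twice continuously differentiable on [0,T) with s(0) = 0, s'(0) = σ, and s''(t) = 2 s(t)³ − t s(t) for all t ∈ [0,T). Then for every t with 1 ≤ t < T one has 2 s(t)² − t > 0 and 4 s(t) s'(t) − 1 > 0. -/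
open Set

theorem pii_mono {T : ℝ} {F F' : ℝ → ℝ}
    (h : ∀ t ∈ Ico (0:ℝ) T, HasDerivWithinAt F (F' t) (Ico 0 T) t)
    {a b : ℝ} (ha : 0 ≤ a) (hab : a ≤ b) (hb : b < T)
    (hn : ∀ t, a < t → t < b → 0 ≤ F' t) : F a ≤ F b := by
  have hsub : Icc a b ⊆ Ico 0 T := fun x hx => ⟨ha.trans hx.1, hx.2.trans_lt hb⟩
  have : MonotoneOn F (Icc a b) := by
    apply monotoneOn_of_hasDerivWithinAt_nonneg (f' := F') (convex_Icc a b)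
    · intro x hx
      exact ((h x (hsub hx)).mono hsub).continuousWithinAt
    · intro x hx
      exact (h x (hsub (interior_subset hx))).mono (interior_subset.trans hsub)
    · intro x hx
      rw [interior_Icc] at hx
      exact hn x hx.1 hx.2
  exact this ⟨le_rfl, hab⟩ ⟨hab, le_rfl⟩ hab

theorem pii_smono {T : ℝ} {F F' : ℝ → ℝ}
    (h : ∀ t ∈ Ico (0:ℝ) T, HasDerivWithinAt F (F' t) (Ico 0 T) t)
    {a b : ℝ} (ha : 0 ≤ a) (hab : a < b) (hb : b < T)
    (hn : ∀ t, a < t → t < b → 0 < F' t) : F a < F b := by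
  have hsub : Icc a b ⊆ Ico 0 T := fun x hx => ⟨ha.trans hx.1, hx.2.trans_lt hb⟩
  have : StrictMonoOn F (Icc a b) := by
    apply strictMonoOn_of_hasDerivWithinAt_pos (f' := F') (convex_Icc a b)
    · intro x hx
      exact ((h x (hsub hx)).mono hsub).continuousWithinAt
    · intro x hx
      exact (h x (hsub (interior_subset hx))).mono (interior_subset.trans hsub)
    · intro x hx
      rw [interior_Icc] at hx
      exact hn x hx.1 hx.2
  exact this ⟨le_rfl, hab.le⟩ ⟨hab.le, le_rfl⟩ hab

/-- For a solution of `s'' = 2s³ − ts` with `s(0) = 0` and `s'(0) = σ ≥ √3/2`,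
for `1 ≤ t < T` one has `2s(t)² − t > 0` and `4s(t)s'(t) − 1 > 0`. -/
theorem painleveIIneg_outside_parabola (σ T : ℝ) (hσ : Real.sqrt 3 / 2 ≤ σ) (hT : 1 < T)
    (s s' s'' : ℝ → ℝ)
    (hderiv1 : ∀ t ∈ Ico (0:ℝ) T, HasDerivWithinAt s (s' t) (Ico 0 T) t)
    (hderiv2 : ∀ t ∈ Ico (0:ℝ) T, HasDerivWithinAt s' (s'' t) (Ico 0 T) t)
    (hcont : ContinuousOn s'' (Ico 0 T))
    (hs0 : s 0 = 0) (hs'0 : s' 0 = σ)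
    (heq : ∀ t ∈ Ico (0:ℝ) T, s'' t = 2 * s t ^ 3 - t * s t) :
    ∀ t, 1 ≤ t → t < T → 0 < 2 * s t ^ 2 - t ∧ 0 < 4 * s t * s' t - 1 := by
  have h3 : 0 < Real.sqrt 3 := by positivity
  have h3s : Real.sqrt 3 ^ 2 = 3 := Real.sq_sqrt (by norm_num)
  have hσ0 : 0 < σ := by linarith
  have hσ2 : 3 / 4 ≤ σ ^ 2 := by nlinarith
  obtain ⟨c, hc0, hc2⟩ : ∃ c : ℝ, 0 < c ∧ c ^ 2 = 1 / 2 :=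
    ⟨Real.sqrt (1/2), by positivity, Real.sq_sqrt (by norm_num)⟩
  have hcs : ContinuousOn s (Ico 0 T) := fun x hx => (hderiv1 x hx).continuousWithinAt
  have hcs' : ContinuousOn s' (Ico 0 T) := fun x hx => (hderiv2 x hx).continuousWithinAt
  -- energy
  have hH : ∀ t ∈ Ico (0:ℝ) T,
      HasDerivWithinAt (fun t => s' t ^ 2 - s t ^ 4 + t * s t ^ 2) (s t ^ 2) (Ico 0 T) t := by
    intro t ht
    have h1 := hderiv1 t ht
    have h2 := hderiv2 t ht
    have := ((h2.pow 2).sub (h1.pow 4)).add ((hasDerivWithinAt_id t (Ico 0 T)).mul (h1.pow 2))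
    refine this.congr_deriv ?_
    rw [heq t ht]
    simp
    ring
  have hE : ∀ t, 0 ≤ t → t < T → 3 / 4 ≤ s' t ^ 2 - s t ^ 4 + t * s t ^ 2 := by
    intro t h0 h1
    have := pii_mono hH le_rfl h0 h1 (fun x _ _ => sq_nonneg _)
    simp only [hs0, hs'0] at this
    linarith
  have hE2 : ∀ t, 0 ≤ t → t < T → 3 / 4 - t ^ 2 / 4 ≤ s' t ^ 2 := by
    intro t h0 h1
    nlinarith [hE t h0 h1, sq_nonneg (s t ^ 2 - t / 2)]
  have hpos : ∀ t, 0 ≤ t → t ≤ 1 → 0 < s' t := by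
    intro t h0 h1
    by_contra hneg
    push Not at hneg
    have hsub : Icc 0 t ⊆ Ico 0 T := fun x hx => ⟨hx.1, by linarith [hx.2]⟩
    obtain ⟨x, hx, hx0⟩ := intermediate_value_Icc' h0 (hcs'.mono hsub)
      (show (0:ℝ) ∈ Icc (s' t) (s' 0) from ⟨hneg, by rw [hs'0]; exact hσ0.le⟩)
    have := hE2 x hx.1 (hsub hx).2
    rw [hx0] at this
    nlinarith [hx.1, hx.2]
  have hs'c : ∀ t, 0 ≤ t → t < 1 → c < s' t := by
    intro t h0 h1
    have := hE2 t h0 (by linarith)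
    have := hpos t h0 h1.le
    apply lt_of_pow_lt_pow_left₀ 2 this.le
    nlinarith
  have hs1 : c < s 1 := by
    have hd : ∀ t ∈ Ico (0:ℝ) T,
        HasDerivWithinAt (fun t => s t - t * c) (s' t - 1 * c) (Ico 0 T) t := fun t ht =>
      (hderiv1 t ht).sub ((hasDerivWithinAt_id t (Ico 0 T)).mul_const c)
    have := pii_smono hd le_rfl one_pos hT (fun x h0 h1 => by linarith [hs'c x h0.le h1])
    simp only [hs0] at this
    linarith
  have hs1sq : 1 / 2 < s 1 ^ 2 := by nlinarith
  have hs'1 : c < s' 1 := by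
    have := hE 1 zero_le_one hT
    apply lt_of_pow_lt_pow_left₀ 2 (hpos 1 zero_le_one le_rfl).le
    nlinarith [mul_pos (sub_pos.2 hs1sq) (sub_pos.2 hs1sq)]
  have hf : ∀ t ∈ Ico (0:ℝ) T,
      HasDerivWithinAt (fun t => 2 * s t ^ 2 - t) (4 * s t * s' t - 1) (Ico 0 T) t := by
    intro t ht
    have := (((hderiv1 t ht).pow 2).const_mul 2).sub (hasDerivWithinAt_id t (Ico 0 T))
    refine this.congr_deriv ?_
    simp
    ring
  have key : ∀ τ, 1 ≤ τ → τ < T → (∀ t, 1 ≤ t → t < τ → 0 < 2 * s t ^ 2 - t ∧ 0 < s t) →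
      0 < 2 * s τ ^ 2 - τ ∧ 0 < s τ ∧ 0 < 4 * s τ * s' τ - 1 := by
    intro τ h1 hτ hg
    have hs' : ∀ t, 1 ≤ t → t ≤ τ → c < s' t := by
      intro t h1t htτ
      refine hs'1.trans_le (pii_mono hderiv2 zero_le_one h1t (by linarith) ?_)
      intro x hx1 hx2
      obtain ⟨ha, hb⟩ := hg x hx1.le (by linarith)
      rw [heq x ⟨by linarith, by linarith⟩]
      nlinarith [mul_pos ha hb]
    have hs : ∀ t, 1 ≤ t → t ≤ τ → c < s t := by
      intro t h1t htτ
      refine hs1.trans_le (pii_mono hderiv1 zero_le_one h1t (by linarith) ?_)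
      intro x hx1 hx2
      linarith [hs' x hx1.le (by linarith)]
    have hff : ∀ t, 1 ≤ t → t ≤ τ → 0 < 4 * s t * s' t - 1 := by
      intro t h1t htτ
      have a := hs t h1t htτ
      have b := hs' t h1t htτ
      nlinarith [mul_pos (sub_pos.2 a) (sub_pos.2 b)]
    refine ⟨?_, by linarith [hs τ h1 le_rfl], hff τ h1 le_rfl⟩
    have := pii_mono hf zero_le_one h1 hτ (fun x hx1 hx2 => (hff x hx1.le hx2.le).le)
    linarith
  have good : ∀ t, 1 ≤ t → t < T → 0 < 2 * s t ^ 2 - t ∧ 0 < s t := by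
    intro b hb1 hbT
    by_contra hbad
    have hsub : Icc 1 b ⊆ Ico 0 T := fun x hx => ⟨by linarith [hx.1], by linarith [hx.2]⟩
    let m : ℝ → ℝ := fun t => min (2 * s t ^ 2 - t) (s t)
    have hm : ContinuousOn m (Icc 1 b) := by
      have := hcs.mono hsub
      fun_prop
    have hK : IsCompact (Icc 1 b ∩ m ⁻¹' Iic 0) :=
      isCompact_Icc.of_isClosed_subset (hm.preimage_isClosed_of_isClosed isClosed_Icc isClosed_Iic)
        inter_subset_left
    have hiff : ∀ t, m t ∈ Iic (0:ℝ) ↔ ¬ (0 < 2 * s t ^ 2 - t ∧ 0 < s t) := by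
      intro t
      rw [← lt_min_iff, not_lt]
      rfl
    obtain ⟨τ, ⟨hτ1, hτ2⟩, hτm⟩ := hK.exists_isLeast ⟨b, ⟨hb1, le_rfl⟩, (hiff b).2 hbad⟩
    have hk := key τ hτ1.1 (hsub hτ1).2 (by
      intro t h1 h2
      by_contra hn
      exact absurd (hτm ⟨⟨h1, h2.le.trans hτ1.2⟩, (hiff t).2 hn⟩) (not_le.2 h2))
    exact (hiff τ).1 hτ2 ⟨hk.1, hk.2.1⟩
  intro t h1 hT'
  have := key t h1 hT' (fun x hx1 hx2 => good x hx1 (hx2.trans hT'))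
  exact ⟨this.1, this.2.2⟩
end

section
/- Let σ ≥ √3/2. Then there is no function s : ℝ → ℝ that is twice continuously differentiable on [0,∞), satisfies s''(t) = 2 s(t)³ − t s(t) for all t ≥ 0, and has s(0) = 0 and s'(0) = σ. (Every such solution experiences blow-up in finite positive time.) -/
open Set

lemma mono_aux_s16 (f f' : ℝ → ℝ) (a b : ℝ) (ha : 0 ≤ a) (hab : a ≤ b)
    (hd : ∀ t, a ≤ t → t ≤ b → HasDerivWithinAt f (f' t) (Ici 0) t)
    (hn : ∀ t, a ≤ t → t ≤ b → 0 ≤ f' t) : f a ≤ f b := by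
  have hsub : Icc a b ⊆ Ici (0:ℝ) := fun x hx => le_trans ha hx.1
  have h : MonotoneOn f (Icc a b) := by
    apply monotoneOn_of_hasDerivWithinAt_nonneg (f' := f') (convex_Icc a b)
    · intro t ht
      exact ((hd t ht.1 ht.2).mono hsub).continuousWithinAt
    · intro t ht
      have ht' := interior_subset ht
      exact (hd t ht'.1 ht'.2).mono (interior_subset.trans hsub)
    · intro t ht
      have ht' := interior_subset ht
      exact hn t ht'.1 ht'.2
  exact h (left_mem_Icc.2 hab) (right_mem_Icc.2 hab) hab

/-- Blow-up for `w'' ≥ 2 w²`, as long as `w ≥ 0`. -/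
lemma blowup_aux_s16 (w w' w'' : ℝ → ℝ)
    (hw : ∀ t, 0 ≤ t → HasDerivWithinAt w (w' t) (Ici 0) t)
    (hw' : ∀ t, 0 ≤ t → HasDerivWithinAt w' (w'' t) (Ici 0) t)
    (hge : ∀ t, 0 ≤ t → 0 ≤ w t → 2 * w t ^ 2 ≤ w'' t)
    (h1 : 0 < w 1) (h1' : 0 < w' 1) : False := by
  have step : ∀ T, 1 ≤ T → (∀ t, 1 ≤ t → t ≤ T → 0 ≤ w t) →
      w' 1 ≤ w' T := by
    intro T hT hpos
    refine mono_aux_s16 w' w'' 1 T zero_le_one hT (fun t h _ => hw' t (by linarith)) ?_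
    intro t h h2
    have := hge t (by linarith) (hpos t h h2)
    nlinarith [sq_nonneg (w t)]
  have step2 : ∀ T, 1 ≤ T → (∀ t, 1 ≤ t → t ≤ T → 0 ≤ w t) →
      w 1 + w' 1 * (T - 1) ≤ w T := by
    intro T hT hpos
    have := mono_aux_s16 (fun t => w t - w' 1 * t) (fun t => w' t - w' 1 * 1) 1 T zero_le_one hT
      (fun t h _ => (hw t (by linarith)).sub ((hasDerivWithinAt_id t _).const_mul _)) (by
        intro t h h2
        have := step t h (fun u hu hu2 => hpos u hu (hu2.trans h2))
        linarith)
    linarith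
  have hpos : ∀ T, 1 ≤ T → 0 < w T := by
    by_contra! hcon
    obtain ⟨T, hT, hTn⟩ := hcon
    have hc : ContinuousOn w (Icc 1 T) := fun t ht =>
      ((hw t (by linarith [ht.1])).continuousWithinAt).mono
        (fun x hx => le_trans zero_le_one hx.1)
    have hK : IsCompact (Icc 1 T ∩ w ⁻¹' Iic 0) :=
      isCompact_Icc.of_isClosed_subset
        (hc.preimage_isClosed_of_isClosed isClosed_Icc isClosed_Iic) inter_subset_left
    obtain ⟨m, hm⟩ := hK.exists_isLeast ⟨T, ⟨hT, le_rfl⟩, hTn⟩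
    have hmK := hm.1
    have hlt : ∀ t, 1 ≤ t → t < m → 0 < w t := by
      intro t h h2
      by_contra! h3
      have := hm.2 ⟨⟨h, h2.le.trans hmK.1.2⟩, h3⟩
      linarith
    have hm1 : 1 ≤ m := hmK.1.1
    have hm0 : w m ≤ 0 := hmK.2
    have hmon : MonotoneOn w (Icc 1 m) := by
      apply monotoneOn_of_hasDerivWithinAt_nonneg (f' := w') (convex_Icc 1 m)
      · exact hc.mono (Icc_subset_Icc le_rfl hmK.1.2)
      · intro t ht
        have ht' := interior_subset ht
        refine (hw t (by linarith [ht'.1])).mono (fun x hx => ?_)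
        have hx' := interior_subset hx
        exact le_trans zero_le_one hx'.1
      · intro t ht
        rw [interior_Icc] at ht
        have := step t ht.1.le (fun u hu hu2 => (hlt u hu (by linarith [ht.2])).le)
        linarith
    have := hmon (left_mem_Icc.2 hm1) (right_mem_Icc.2 hm1) hm1
    linarith
  have hw'pos : ∀ T, 1 ≤ T → 0 < w' T := fun T hT =>
    lt_of_lt_of_le h1' (step T hT (fun t h _ => (hpos t h).le))
  have hgrow : ∀ T, 1 ≤ T → w 1 + w' 1 * (T - 1) ≤ w T := fun T hT =>
    step2 T hT (fun t h _ => (hpos t h).le)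
  -- energy
  have hen : ∀ T, 1 ≤ T → w' 1 ^ 2 - 4 / 3 * w 1 ^ 3 ≤ w' T ^ 2 - 4 / 3 * w T ^ 3 := by
    intro T hT
    refine mono_aux_s16 (fun t => w' t ^ 2 - 4 / 3 * w t ^ 3)
      (fun t => 2 * w' t * (w'' t - 2 * w t ^ 2)) 1 T zero_le_one hT ?_ ?_
    · intro t h _
      have h0 : 0 ≤ t := by linarith
      have := ((hw' t h0).pow 2).sub (((hw t h0).pow 3).const_mul (4 / 3))
      refine this.congr_deriv ?_
      push_cast
      ring
    · intro t h _
      have := hge t (by linarith) (hpos t h).le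
      have h3 := hw'pos t h
      have : 0 ≤ w'' t - 2 * w t ^ 2 := by linarith
      positivity
  -- time when w is large
  set M : ℝ := 1 + 4 * w 1 ^ 3 with hM
  have hM1 : 1 ≤ M := by have : 0 < w 1 ^ 3 := by positivity
                         linarith
  set T₀ : ℝ := 1 + M / w' 1 with hT₀
  have hT₀1 : 1 ≤ T₀ := by have : 0 < M / w' 1 := by positivity
                           linarith
  have hbig : ∀ t, T₀ ≤ t → w t ^ 3 ≤ w' t ^ 2 := by
    intro t ht
    have h1t : 1 ≤ t := hT₀1.trans ht
    have hg := hgrow t h1t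
    have h2 : M ≤ w' 1 * (t - 1) := by
      have : M / w' 1 ≤ t - 1 := by linarith
      rw [div_le_iff₀ h1'] at this
      linarith
    have h3 : M ≤ w t := by linarith
    have h4 : w t ≤ w t ^ 3 := le_self_pow₀ (hM1.trans h3) (by norm_num)
    have := hen t h1t
    nlinarith [sq_nonneg (w' 1)]
  -- final contradiction
  have hfin : ∀ T, T₀ ≤ T → (Real.sqrt (w T))⁻¹ ≤ (Real.sqrt (w T₀))⁻¹ - (T - T₀) / 2 := by
    intro T hT
    have := mono_aux_s16 (fun t => -(Real.sqrt (w t))⁻¹ - 1 / 2 * t)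
      (fun t => -(-(w' t / (2 * Real.sqrt (w t))) / (Real.sqrt (w t)) ^ 2) - 1 / 2 * 1) T₀ T
      (by linarith) hT ?_ ?_
    · linarith
    · intro t h _
      have hp := hpos t (hT₀1.trans h)
      have hs := (hw t (by linarith)).sqrt hp.ne'
      exact ((hs.fun_inv (Real.sqrt_pos.2 hp).ne').neg).sub
        ((hasDerivWithinAt_id t _).const_mul _)
    · intro t h _
      have hp := hpos t (hT₀1.trans h)
      have hr := Real.sqrt_pos.2 hp
      have hsq := Real.sq_sqrt hp.le
      have hb := hbig t h
      have hw'p := hw'pos t (hT₀1.trans h)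
      have hc : Real.sqrt (w t) ^ 3 ≤ w' t := by
        refine (abs_le_of_sq_le_sq' ?_ hw'p.le).2
        calc (Real.sqrt (w t) ^ 3) ^ 2 = (Real.sqrt (w t) ^ 2) ^ 3 := by ring
          _ = w t ^ 3 := by rw [hsq]
          _ ≤ _ := hb
      have : -(-(w' t / (2 * Real.sqrt (w t))) / (Real.sqrt (w t)) ^ 2) - 1 / 2 * 1
          = (w' t - Real.sqrt (w t) ^ 3) / (2 * Real.sqrt (w t) ^ 3) := by
        field_simp
      rw [this]
      apply div_nonneg (by linarith) (by positivity)
  have hq : 0 < (Real.sqrt (w T₀))⁻¹ := inv_pos.2 (Real.sqrt_pos.2 (hpos _ hT₀1))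
  have h5 := hfin (T₀ + 2 * (Real.sqrt (w T₀))⁻¹) (by linarith)
  have h6 := inv_pos.2 (Real.sqrt_pos.2 (hpos (T₀ + 2 * (Real.sqrt (w T₀))⁻¹) (by linarith)))
  linarith

/-- If `σ ≥ √3/2` then there is no global solution on `[0,∞)` of `s'' = 2s³ − ts`
with `s(0) = 0` and `s'(0) = σ`: every such solution blows up in finite time. -/
theorem painleveIIneg_no_global_solution (σ : ℝ) (hσ : Real.sqrt 3 / 2 ≤ σ) :
    ¬ ∃ s s' s'' : ℝ → ℝ,
      (∀ t ∈ Ici (0:ℝ), HasDerivWithinAt s (s' t) (Ici 0) t) ∧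
      (∀ t ∈ Ici (0:ℝ), HasDerivWithinAt s' (s'' t) (Ici 0) t) ∧
      ContinuousOn s'' (Ici 0) ∧
      s 0 = 0 ∧ s' 0 = σ ∧
      (∀ t ∈ Ici (0:ℝ), s'' t = 2 * s t ^ 3 - t * s t) := by
  rintro ⟨s, s', s'', hs, hs', -, h0, h0', heq⟩
  have hσ2 : 3 / 4 ≤ σ ^ 2 := by
    have h3 : Real.sqrt 3 ^ 2 = 3 := Real.sq_sqrt (by norm_num)
    have := Real.sqrt_nonneg 3
    nlinarith
  -- energy inequality
  have hen : ∀ T, 0 ≤ T → 3 / 4 ≤ s' T ^ 2 - s T ^ 4 + T * s T ^ 2 := by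
    intro T hT
    have := mono_aux_s16 (fun t => s' t ^ 2 - s t ^ 4 + t * s t ^ 2) (fun t => s t ^ 2) 0 T le_rfl hT
      (by
        intro t h _
        have := (((hs' t h).pow 2).sub ((hs t h).pow 4)).add
          ((hasDerivWithinAt_id t _).mul ((hs t h).pow 2))
        refine this.congr_deriv ?_
        rw [heq t h]
        simp
        ring)
      (fun t _ _ => sq_nonneg _)
    simp only [h0, h0'] at this
    linarith
  set w : ℝ → ℝ := fun t => 2 * s t ^ 2 - t with hwdef
  set w' : ℝ → ℝ := fun t => 4 * s t * s' t - 1 with hw'def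
  set w'' : ℝ → ℝ := fun t => 4 * s' t ^ 2 + 4 * s t ^ 2 * w t with hw''def
  have hw : ∀ t, 0 ≤ t → HasDerivWithinAt w (w' t) (Ici 0) t := by
    intro t h
    have := (((hs t h).pow 2).const_mul 2).sub (hasDerivWithinAt_id t (Ici 0))
    refine this.congr_deriv ?_
    simp only [hw'def]
    push_cast
    ring
  have hw' : ∀ t, 0 ≤ t → HasDerivWithinAt w' (w'' t) (Ici 0) t := by
    intro t h
    have := (((hs t h).const_mul 4).mul (hs' t h)).sub_const 1
    refine this.congr_deriv ?_
    simp only [hw''def, hwdef]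
    rw [heq t h]
    ring
  have hlow : ∀ t, 0 ≤ t → 3 - 4 / 3 * t ^ 2 ≤ w'' t := by
    intro t h
    have := hen t h
    simp only [hw''def, hwdef]
    nlinarith [sq_nonneg (3 * s t ^ 2 - t)]
  have hL' : ∀ T, 0 ≤ T → -1 + 3 * T - 4 / 9 * T ^ 3 ≤ w' T := by
    intro T hT
    have := mono_aux_s16 (fun t => w' t - 3 * t + 4 / 9 * t ^ 3)
      (fun t => w'' t - (3 - 4 / 3 * t ^ 2)) 0 T le_rfl hT
      (by
        intro t h _
        have hid := hasDerivWithinAt_id t (Ici (0:ℝ))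
        have := ((hw' t h).sub (hid.const_mul 3)).add ((hid.pow 3).const_mul (4 / 9))
        refine this.congr_deriv ?_
        simp
        ring)
      (fun t h _ => by linarith [hlow t h])
    have e0 : w' 0 = -1 := by simp [hw'def, h0]
    simp only [e0] at this
    linarith
  have hL : ∀ T, 0 ≤ T → -T + 3 / 2 * T ^ 2 - 1 / 9 * T ^ 4 ≤ w T := by
    intro T hT
    have := mono_aux_s16 (fun t => w t + t - 3 / 2 * t ^ 2 + 1 / 9 * t ^ 4)
      (fun t => w' t - (-1 + 3 * t - 4 / 9 * t ^ 3)) 0 T le_rfl hT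
      (by
        intro t h _
        have hid := hasDerivWithinAt_id t (Ici (0:ℝ))
        have := (((hw t h).add hid).sub ((hid.pow 2).const_mul (3 / 2))).add
          ((hid.pow 4).const_mul (1 / 9))
        refine this.congr_deriv ?_
        simp
        ring)
      (fun t h _ => by linarith [hL' t h])
    have e0 : w 0 = 0 := by simp [hwdef, h0]
    simp only [e0] at this
    linarith
  refine blowup_aux_s16 w w' w'' hw hw' ?_ ?_ ?_
  · intro t h hp
    have e : 2 * s t ^ 2 = w t + t := by simp only [hwdef]; ring
    have e2 : w'' t = 4 * s' t ^ 2 + 2 * (w t + t) * w t := by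
      rw [← e]; simp only [hw''def]; ring
    rw [e2]
    nlinarith [sq_nonneg (s' t), mul_nonneg h hp]
  · have := hL 1 zero_le_one
    linarith
  · have := hL' 1 zero_le_one
    linarith
end

section
/- Let σ > 0, let T > 0, and let s : ℝ → ℝ be twice continuously differentiable on [0,T) with s(0) = 0, s'(0) = σ, and s''(t) = 2 s(t)³ − t s(t) for all t ∈ [0,T). If s is strictly increasing on [0,T), then for every t with 0 < t < T and √σ · t < π/2 one has s(t) < √σ · tan(√σ · t). (In particular a strictly increasing solution does not blow up before time π/√(4σ).) -/
open Set Real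

/-- A strictly increasing solution of `s'' = 2s³ − ts` with `s(0) = 0`, `s'(0) = σ > 0`
satisfies `s(t) < √σ tan(√σ t)` for `0 < t < T` with `√σ t < π/2`. -/
theorem painleveIIneg_tan_bound (σ T : ℝ) (hσ : 0 < σ) (hT : 0 < T) (s s' s'' : ℝ → ℝ)
    (hderiv1 : ∀ t ∈ Ico (0:ℝ) T, HasDerivWithinAt s (s' t) (Ico 0 T) t)
    (hderiv2 : ∀ t ∈ Ico (0:ℝ) T, HasDerivWithinAt s' (s'' t) (Ico 0 T) t)
    (hcont : ContinuousOn s'' (Ico 0 T))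
    (hs0 : s 0 = 0) (hs'0 : s' 0 = σ)
    (heq : ∀ t ∈ Ico (0:ℝ) T, s'' t = 2 * s t ^ 3 - t * s t)
    (hmono : StrictMonoOn s (Ico 0 T)) :
    ∀ t, 0 < t → t < T → Real.sqrt σ * t < π / 2 →
      s t < Real.sqrt σ * Real.tan (Real.sqrt σ * t) := by
  intro t ht htT hlt
  have hInt : interior (Ico (0:ℝ) T) = Ioo 0 T := interior_Ico
  have hmem : ∀ x ∈ Ioo (0:ℝ) T, x ∈ Ico (0:ℝ) T := fun x hx => ⟨hx.1.le, hx.2⟩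
  have h0mem : (0:ℝ) ∈ Ico (0:ℝ) T := ⟨le_rfl, hT⟩
  have hnhds : ∀ x ∈ Ioo (0:ℝ) T, Ico (0:ℝ) T ∈ nhds x := fun x hx => Ico_mem_nhds hx.1 hx.2
  have hd1 : ∀ x ∈ Ioo (0:ℝ) T, HasDerivAt s (s' x) x := fun x hx =>
    (hderiv1 x (hmem x hx)).hasDerivAt (hnhds x hx)
  have hd2 : ∀ x ∈ Ioo (0:ℝ) T, HasDerivAt s' (s'' x) x := fun x hx =>
    (hderiv2 x (hmem x hx)).hasDerivAt (hnhds x hx)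
  have hc1 : ContinuousOn s (Ico 0 T) := fun x hx => (hderiv1 x hx).continuousWithinAt
  have hc2 : ContinuousOn s' (Ico 0 T) := fun x hx => (hderiv2 x hx).continuousWithinAt
  have hspos : ∀ x ∈ Ioo (0:ℝ) T, 0 < s x := fun x hx => by
    have := hmono h0mem (hmem x hx) hx.1
    rwa [hs0] at this
  have hs'nn : ∀ x ∈ Ioo (0:ℝ) T, 0 ≤ s' x := fun x hx => by
    have h := hmono.monotoneOn.derivWithin_nonneg (x := x)
    rwa [derivWithin_of_mem_nhds (hnhds x hx), (hd1 x hx).deriv] at h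
  -- the energy is nonincreasing
  have hE : AntitoneOn (fun x => s' x ^ 2 - s x ^ 4) (Ico 0 T) := by
    refine antitoneOn_of_hasDerivWithinAt_nonpos (convex_Ico 0 T) (by fun_prop)
      (f' := fun x => 2 * s' x * s'' x - 4 * s x ^ 3 * s' x) ?_ ?_
    · rw [hInt]
      intro x hx
      have := (((hd2 x hx).pow 2).sub ((hd1 x hx).pow 4)).hasDerivWithinAt (s := Ioo 0 T)
      exact this.congr_deriv (by push_cast; ring)
    · rw [hInt]
      intro x hx
      rw [heq x (hmem x hx)]
      have := mul_nonneg (mul_nonneg hx.1.le (hspos x hx).le) (hs'nn x hx)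
      nlinarith
  have hbound : ∀ x ∈ Ioo (0:ℝ) T, s' x < σ + s x ^ 2 := fun x hx => by
    have h := hE h0mem (hmem x hx) hx.1.le
    simp only [hs0, hs'0] at h
    have hp : 0 < σ * s x ^ 2 := mul_pos hσ (pow_pos (hspos x hx) 2)
    refine lt_of_pow_lt_pow_left₀ 2 (by positivity) ?_
    nlinarith
  have hr : 0 < √σ := Real.sqrt_pos.2 hσ
  have hrr : √σ ^ 2 = σ := Real.sq_sqrt hσ.le
  have hg : StrictAntiOn (fun x => Real.arctan (s x / √σ) - √σ * x) (Ico 0 T) := by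
    refine strictAntiOn_of_hasDerivWithinAt_neg (convex_Ico 0 T) ?_
      (f' := fun x => 1 / (1 + (s x / √σ) ^ 2) * (s' x / √σ) - √σ) ?_ ?_
    · exact (Real.continuous_arctan.comp_continuousOn (hc1.div_const _)).sub (by fun_prop)
    · rw [hInt]
      intro x hx
      have := (((hd1 x hx).div_const (√σ)).arctan.sub ((hasDerivAt_id x).const_mul (√σ)))
      exact (this.hasDerivWithinAt (s := Ioo 0 T)).congr_deriv (by simp)
    · rw [hInt]
      intro x hx
      have hb := hbound x hx
      have hp : 0 < √σ ^ 2 + s x ^ 2 := by positivity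
      have e : 1 / (1 + (s x / √σ) ^ 2) * (s' x / √σ) = √σ * (s' x / (√σ ^ 2 + s x ^ 2)) := by
        field_simp
      have hq : s' x / (√σ ^ 2 + s x ^ 2) < 1 := by
        rw [div_lt_one hp, hrr]
        exact hb
      show 1 / (1 + (s x / √σ) ^ 2) * (s' x / √σ) - √σ < 0
      rw [e]
      nlinarith
  have h := hg h0mem ⟨ht.le, htT⟩ ht
  simp only [hs0, zero_div, Real.arctan_zero, mul_zero, sub_zero] at h
  have h1 : Real.arctan (s t / √σ) < √σ * t := by linarith
  have h2 := Real.tan_lt_tan_of_lt_of_lt_pi_div_two (Real.neg_pi_div_two_lt_arctan _) hlt h1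
  rw [Real.tan_arctan, div_lt_iff₀ hr] at h2
  linarith
end

section
/- Let s : ℝ → ℝ be twice continuously differentiable on [0,∞) and satisfy s''(t) = 2 s(t)³ − t s(t) for all t ≥ 0, and let 0 ≤ a < b be consecutive zeros of s (that is, s(a) = 0, s(b) = 0, and s(t) ≠ 0 for all t ∈ (a,b)). Let g : ℝ → ℝ be twice continuously differentiable on [0,∞) and satisfy the Airy equation g''(t) + t g(t) = 0 for all t ≥ 0. Then g vanishes at some point of the open interval (a,b). -/
open Set

/-- A continuous nonvanishing function on an open interval has constant sign. -/
lemma sign_const_aux (f : ℝ → ℝ) (a b : ℝ) (hf : ContinuousOn f (Ioo a b))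
    (hne : ∀ t ∈ Ioo a b, f t ≠ 0) :
    (∀ t ∈ Ioo a b, 0 < f t) ∨ (∀ t ∈ Ioo a b, 0 < -f t) := by
  by_contra hcon
  push Not at hcon
  obtain ⟨⟨x, hx, hx0⟩, ⟨y, hy, hy0⟩⟩ := hcon
  obtain ⟨z, hz, hz0⟩ := isPreconnected_Ioo.intermediate_value hx hy hf
    (show (0:ℝ) ∈ Icc (f x) (f y) from ⟨hx0, by linarith⟩)
  exact hne z hz hz0

lemma deriv_left_nonneg_aux (f : ℝ → ℝ) (d a b : ℝ) (hab : a < b)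
    (hd : HasDerivWithinAt f d (Ioi a) a) (h0 : f a = 0) (hp : ∀ t ∈ Ioo a b, 0 < f t) :
    0 ≤ d := by
  rw [hasDerivWithinAt_iff_tendsto_slope' (by simp)] at hd
  refine ge_of_tendsto hd ?_
  filter_upwards [Ioo_mem_nhdsGT hab] with t ht
  rw [slope_def_field, h0, sub_zero]
  exact div_nonneg (hp t ht).le (sub_nonneg.2 ht.1.le)

lemma deriv_right_nonpos_aux (f : ℝ → ℝ) (d a b : ℝ) (hab : a < b)
    (hd : HasDerivWithinAt f d (Iio b) b) (h0 : f b = 0) (hp : ∀ t ∈ Ioo a b, 0 < f t) :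
    d ≤ 0 := by
  rw [hasDerivWithinAt_iff_tendsto_slope' (by simp)] at hd
  refine le_of_tendsto hd ?_
  filter_upwards [Ioo_mem_nhdsLT hab] with t ht
  rw [slope_def_field, h0, sub_zero]
  exact div_nonpos_of_nonneg_of_nonpos (hp t ht).le (sub_nonpos.2 ht.2.le)

/-- The Wronskian argument when both functions are positive. -/
lemma sturm_pos_aux (s s' s'' g g' g'' : ℝ → ℝ)
    (hs1 : ∀ t ∈ Ici (0:ℝ), HasDerivWithinAt s (s' t) (Ici 0) t)
    (hs2 : ∀ t ∈ Ici (0:ℝ), HasDerivWithinAt s' (s'' t) (Ici 0) t)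
    (hseq : ∀ t ∈ Ici (0:ℝ), s'' t = 2 * s t ^ 3 - t * s t)
    (hg1 : ∀ t ∈ Ici (0:ℝ), HasDerivWithinAt g (g' t) (Ici 0) t)
    (hg2 : ∀ t ∈ Ici (0:ℝ), HasDerivWithinAt g' (g'' t) (Ici 0) t)
    (hgeq : ∀ t ∈ Ici (0:ℝ), g'' t + t * g t = 0)
    (a b : ℝ) (ha : 0 ≤ a) (hab : a < b)
    (hsa : s a = 0) (hsb : s b = 0) (hsp : ∀ t ∈ Ioo a b, 0 < s t)
    (hgp : ∀ t ∈ Ioo a b, 0 < g t) : False := by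
  have hb : 0 < b := ha.trans_lt hab
  have hW : ∀ t ∈ Ici (0:ℝ), HasDerivWithinAt (fun t => s' t * g t - s t * g' t)
      (2 * s t ^ 3 * g t) (Ici 0) t := by
    intro t ht
    have h := ((hs2 t ht).mul (hg1 t ht)).sub ((hs1 t ht).mul (hg2 t ht))
    refine h.congr_deriv ?_
    have h2 : g'' t = -(t * g t) := by linarith [hgeq t ht]
    rw [hseq t ht, h2]
    ring
  have hsub : Icc a b ⊆ Ici (0:ℝ) := fun t ht => ha.trans ht.1
  have hmono : StrictMonoOn (fun t => s' t * g t - s t * g' t) (Icc a b) := by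
    refine strictMonoOn_of_deriv_pos (convex_Icc a b)
      (fun t ht => ((hW t (hsub ht)).continuousWithinAt.mono hsub)) ?_
    intro t ht
    rw [interior_Icc] at ht
    have h0 : 0 < t := ha.trans_lt ht.1
    rw [((hW t h0.le).hasDerivAt (Ici_mem_nhds h0)).deriv]
    have := hsp t ht
    have := hgp t ht
    positivity
  have hlt := hmono (left_mem_Icc.2 hab.le) (right_mem_Icc.2 hab.le) hab
  have h1 : 0 ≤ s' a := deriv_left_nonneg_aux s _ a b hab
    ((hs1 a ha).mono fun t ht => ha.trans (le_of_lt ht)) hsa hsp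
  have h2 : s' b ≤ 0 := deriv_right_nonpos_aux s _ a b hab
    ((hs1 b hb.le).hasDerivAt (Ici_mem_nhds hb)).hasDerivWithinAt hsb hsp
  have hgc : ContinuousOn g (Icc a b) :=
    fun t ht => (hg1 t (hsub ht)).continuousWithinAt.mono hsub
  have hg0 : ∀ t ∈ Icc a b, 0 ≤ g t := by
    intro t ht
    rw [← closure_Ioo hab.ne] at ht hgc
    exact le_on_closure (f := fun _ => (0:ℝ)) (fun x hx => (hgp x hx).le)
      continuousOn_const hgc ht
  have h3 := hg0 a (left_mem_Icc.2 hab.le)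
  have h4 := hg0 b (right_mem_Icc.2 hab.le)
  simp only [hsa, hsb, zero_mul, sub_zero] at hlt
  have h5 := mul_nonneg h1 h3
  have h6 := mul_nonpos_of_nonpos_of_nonneg h2 h4
  linarith

/-- Sturm comparison: between consecutive zeros `a < b` in `[0,∞)` of a solution of
`s'' = 2s³ − ts`, every Airy function (solution of `g'' + tg = 0` on `[0,∞)`) vanishes. -/
theorem airy_vanishes_between_zeros (s s' s'' g g' g'' : ℝ → ℝ)
    (hsderiv1 : ∀ t ∈ Ici (0:ℝ), HasDerivWithinAt s (s' t) (Ici 0) t)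
    (hsderiv2 : ∀ t ∈ Ici (0:ℝ), HasDerivWithinAt s' (s'' t) (Ici 0) t)
    (hscont : ContinuousOn s'' (Ici 0))
    (hseq : ∀ t ∈ Ici (0:ℝ), s'' t = 2 * s t ^ 3 - t * s t)
    (hgderiv1 : ∀ t ∈ Ici (0:ℝ), HasDerivWithinAt g (g' t) (Ici 0) t)
    (hgderiv2 : ∀ t ∈ Ici (0:ℝ), HasDerivWithinAt g' (g'' t) (Ici 0) t)
    (hgcont : ContinuousOn g'' (Ici 0))
    (hgeq : ∀ t ∈ Ici (0:ℝ), g'' t + t * g t = 0)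
    (a b : ℝ) (ha : 0 ≤ a) (hab : a < b)
    (hsa : s a = 0) (hsb : s b = 0) (hne : ∀ t ∈ Ioo a b, s t ≠ 0) :
    ∃ x ∈ Ioo a b, g x = 0 := by
  by_contra hcon
  push Not at hcon
  have hsub : Ioo a b ⊆ Ici (0:ℝ) := fun t ht => ha.trans ht.1.le
  have hsn := fun t ht => (hsderiv1 t ht).neg
  have hsn2 := fun t ht => (hsderiv2 t ht).neg
  have hgn := fun t ht => (hgderiv1 t ht).neg
  have hgn2 := fun t ht => (hgderiv2 t ht).neg
  have hseqn : ∀ t ∈ Ici (0:ℝ), (fun t => -s'' t) t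
      = 2 * (-s) t ^ 3 - t * (-s) t := by
    intro t ht
    simp only [Pi.neg_apply, hseq t ht]
    ring
  have hgeqn : ∀ t ∈ Ici (0:ℝ), (fun t => -g'' t) t + t * (-g) t = 0 := by
    intro t ht
    simp only [Pi.neg_apply]
    linarith [hgeq t ht]
  have hsa' : (-s) a = 0 := by simp [hsa]
  have hsb' : (-s) b = 0 := by simp [hsb]
  rcases sign_const_aux s a b
    (fun t ht => (hsderiv1 t (hsub ht)).continuousWithinAt.mono hsub) hne with hs | hs <;>
  rcases sign_const_aux g a b
    (fun t ht => (hgderiv1 t (hsub ht)).continuousWithinAt.mono hsub) hcon with hg | hg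
  · exact sturm_pos_aux s s' s'' g g' g'' hsderiv1 hsderiv2 hseq hgderiv1 hgderiv2 hgeq
      a b ha hab hsa hsb hs hg
  · exact sturm_pos_aux s s' s'' (-g) (-g') (fun t => -g'' t) hsderiv1 hsderiv2 hseq
      hgn hgn2 hgeqn a b ha hab hsa hsb hs hg
  · exact sturm_pos_aux (-s) (-s') (fun t => -s'' t) g g' g'' hsn hsn2 hseqn
      hgderiv1 hgderiv2 hgeq a b ha hab hsa' hsb' hs hg
  · exact sturm_pos_aux (-s) (-s') (fun t => -s'' t) (-g) (-g') (fun t => -g'' t) hsn hsn2 hseqn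
      hgn hgn2 hgeqn a b ha hab hsa' hsb' hs hg
end

section
/- Let s : ℝ → ℝ be twice continuously differentiable on [0,∞) and satisfy s''(t) = 2 s(t)³ − t s(t) for all t ≥ 0, and suppose s(t)² ≤ M for all t ≥ 0. Let T > 2M and set λ = 1 − 2M/T. Let g : ℝ → ℝ be twice continuously differentiable on [0,∞) and satisfy g''(t) + λ t g(t) = 0 for all t ≥ 0, and let T ≤ a < b be consecutive zeros of g (that is, g(a) = 0, g(b) = 0, and g(t) ≠ 0 for all t ∈ (a,b)). Then s vanishes at some point of the open interval (a,b). -/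
open Set

theorem sturm_aux (s s' s'' g g' g'' : ℝ → ℝ) (a b : ℝ) (hab : a < b)
    (h1 : ∀ t ∈ Icc a b, HasDerivAt s (s' t) t)
    (h2 : ∀ t ∈ Icc a b, HasDerivAt s' (s'' t) t)
    (h3 : ∀ t ∈ Icc a b, HasDerivAt g (g' t) t)
    (h4 : ∀ t ∈ Icc a b, HasDerivAt g' (g'' t) t)
    (hga : g a = 0) (hgb : g b = 0)
    (hs : ∀ t ∈ Ioo a b, 0 < s t) (hg : ∀ t ∈ Ioo a b, 0 < g t)
    (hlt : ∀ t ∈ Ioo a b, s'' t * g t - s t * g'' t < 0) : False := by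
  have ma : a ∈ Icc a b := left_mem_Icc.2 hab.le
  have mb : b ∈ Icc a b := right_mem_Icc.2 hab.le
  have hga' : 0 ≤ g' a := by
    have h := (h3 a ma).hasDerivWithinAt (s := Ioi a)
    rw [hasDerivWithinAt_iff_tendsto_slope' (by simp)] at h
    refine ge_of_tendsto h ?_
    filter_upwards [Ioo_mem_nhdsGT hab] with t ht
    rw [slope_def_field, hga]
    exact div_nonneg (by linarith [hg t ht]) (by linarith [ht.1])
  have hgb' : g' b ≤ 0 := by
    have h := (h3 b mb).hasDerivWithinAt (s := Iio b)
    rw [hasDerivWithinAt_iff_tendsto_slope' (by simp)] at h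
    refine le_of_tendsto h ?_
    filter_upwards [Ioo_mem_nhdsLT hab] with t ht
    rw [slope_def_field, hgb]
    exact div_nonpos_of_nonneg_of_nonpos (by linarith [hg t ht]) (by linarith [ht.2])
  have hsa : 0 ≤ s a := by
    refine ge_of_tendsto ((h1 a ma).continuousAt.tendsto.mono_left
      (nhdsWithin_le_nhds (s := Ioi a))) ?_
    filter_upwards [Ioo_mem_nhdsGT hab] with t ht using (hs t ht).le
  have hsb : 0 ≤ s b := by
    refine ge_of_tendsto ((h1 b mb).continuousAt.tendsto.mono_left
      (nhdsWithin_le_nhds (s := Iio b))) ?_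
    filter_upwards [Ioo_mem_nhdsLT hab] with t ht using (hs t ht).le
  have hW : ∀ t ∈ Icc a b, HasDerivAt (fun t => s' t * g t - s t * g' t)
      (s'' t * g t - s t * g'' t) t := by
    intro t ht
    have := ((h2 t ht).mul (h3 t ht)).sub ((h1 t ht).mul (h4 t ht))
    exact this.congr_deriv (by ring)
  obtain ⟨c, hc, he⟩ := exists_hasDerivAt_eq_slope _ _ hab
    (fun t ht => (hW t ht).continuousAt.continuousWithinAt)
    (fun t ht => hW t (Ioo_subset_Icc_self ht))
  have := hlt c hc
  rw [he, hga, hgb] at this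
  have h0 : 0 ≤ (s' b * 0 - s b * g' b - (s' a * 0 - s a * g' a)) / (b - a) := by
    apply div_nonneg _ (by linarith)
    nlinarith [mul_nonneg hsa hga', mul_nonneg hsb (neg_nonneg.2 hgb')]
  linarith

theorem sign_aux (f : ℝ → ℝ) (a b : ℝ) (hf : ContinuousOn f (Ioo a b))
    (hne : ∀ t ∈ Ioo a b, f t ≠ 0) :
    ∃ e : ℝ, e * e = 1 ∧ ∀ t ∈ Ioo a b, 0 < e * f t := by
  by_cases h : ∀ t ∈ Ioo a b, 0 < f t
  · exact ⟨1, by norm_num, fun t ht => by linarith [h t ht]⟩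
  · push Not at h
    obtain ⟨u, hu, hfu⟩ := h
    refine ⟨-1, by norm_num, fun t ht => ?_⟩
    by_contra hc
    obtain ⟨x, hx, hx0⟩ := isPreconnected_Ioo.intermediate_value hu ht hf
      (show (0:ℝ) ∈ Icc (f u) (f t) from ⟨hfu, by linarith⟩)
    exact hne x hx hx0

/-- Sturm comparison with modified Airy functions: if `s` solves `s'' = 2s³ − ts` on `[0,∞)`
with `s² ≤ M`, `T > 2M` and `λ = 1 − 2M/T`, then between any consecutive zeros `a < b` in
`[T,∞)` of a `λ`-Airy function `g` (a solution of `g'' + λtg = 0` on `[0,∞)`),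
the function `s` vanishes. -/
theorem transcendent_vanishes_between_airy_zeros (s s' s'' g g' g'' : ℝ → ℝ) (M T : ℝ)
    (hsderiv1 : ∀ t ∈ Ici (0:ℝ), HasDerivWithinAt s (s' t) (Ici 0) t)
    (hsderiv2 : ∀ t ∈ Ici (0:ℝ), HasDerivWithinAt s' (s'' t) (Ici 0) t)
    (hscont : ContinuousOn s'' (Ici 0))
    (hseq : ∀ t ∈ Ici (0:ℝ), s'' t = 2 * s t ^ 3 - t * s t)
    (hbound : ∀ t ∈ Ici (0:ℝ), s t ^ 2 ≤ M)
    (hT : 2 * M < T)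
    (hgderiv1 : ∀ t ∈ Ici (0:ℝ), HasDerivWithinAt g (g' t) (Ici 0) t)
    (hgderiv2 : ∀ t ∈ Ici (0:ℝ), HasDerivWithinAt g' (g'' t) (Ici 0) t)
    (hgcont : ContinuousOn g'' (Ici 0))
    (hgeq : ∀ t ∈ Ici (0:ℝ), g'' t + (1 - 2 * M / T) * t * g t = 0)
    (a b : ℝ) (ha : T ≤ a) (hab : a < b)
    (hga : g a = 0) (hgb : g b = 0) (hne : ∀ t ∈ Ioo a b, g t ≠ 0) :
    ∃ x ∈ Ioo a b, s x = 0 := by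
  by_contra hcon
  push Not at hcon
  have hM : 0 ≤ M := (sq_nonneg _).trans (hbound 0 (by simp))
  have hT0 : 0 < T := by linarith
  have ha0 : 0 < a := by linarith
  have up : ∀ {f f' : ℝ → ℝ}, (∀ t ∈ Ici (0:ℝ), HasDerivWithinAt f (f' t) (Ici 0) t) →
      ∀ t ∈ Icc a b, HasDerivAt f (f' t) t := by
    intro f f' h t ht
    have h0 : 0 < t := by linarith [ht.1]
    exact (h t h0.le).hasDerivAt (Ici_mem_nhds h0)
  have d1 := up hsderiv1
  have d2 := up hsderiv2
  have d3 := up hgderiv1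
  have d4 := up hgderiv2
  obtain ⟨e, he, hes⟩ := sign_aux s a b
    (fun t ht => (d1 t (Ioo_subset_Icc_self ht)).continuousAt.continuousWithinAt) hcon
  obtain ⟨k, hk, hkg⟩ := sign_aux g a b
    (fun t ht => (d3 t (Ioo_subset_Icc_self ht)).continuousAt.continuousWithinAt) hne
  refine sturm_aux (fun t => e * s t) (fun t => e * s' t) (fun t => e * s'' t)
    (fun t => k * g t) (fun t => k * g' t) (fun t => k * g'' t) a b hab
    (fun t ht => (d1 t ht).const_mul e) (fun t ht => (d2 t ht).const_mul e)
    (fun t ht => (d3 t ht).const_mul k) (fun t ht => (d4 t ht).const_mul k)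
    (by simp [hga]) (by simp [hgb]) hes hkg ?_
  intro t ht
  have ht0 : t ∈ Ici (0:ℝ) := by
    have := ht.1
    simp only [mem_Ici]; linarith
  have hg2 : g'' t = -((1 - 2 * M / T) * t * g t) := by linarith [hgeq t ht0]
  have hMp : 0 < M := lt_of_lt_of_le (by have := hcon t ht; positivity) (hbound t ht0)
  have hq : 2 * s t ^ 2 - 2 * M / T * t < 0 := by
    have h1 : 2 * M < 2 * M / T * t := by
      rw [div_mul_eq_mul_div, lt_div_iff₀ hT0]
      have : T < t := by linarith [ht.1]
      nlinarith
    linarith [hbound t ht0]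
  have key : e * s'' t * (k * g t) - e * s t * (k * g'' t)
      = (2 * s t ^ 2 - 2 * M / T * t) * ((e * s t) * (k * g t)) := by
    rw [hseq t ht0, hg2]; ring
  show e * s'' t * (k * g t) - e * s t * (k * g'' t) < 0
  rw [key]
  exact mul_neg_of_neg_of_pos hq (mul_pos (hes t ht) (hkg t ht))
end
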